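/- Let X be a finite type and R ⊆ FreeGroup X a finite set such that Q := PresentedGroup R is Hopfian, admits a surjective group homomorphism onto FreeGroup (Fin 2), and centralizers of non-cyclic free subgroups of Q are trivial. Fix an integer m ≥ 2. Then there exist a finite type Z, a constant c ∈ ℕ, and a computable sequence (R_n)_{n∈ℕ} of finite subsets of FreeGroup Z with |R_n| = c for all n, such that the set { n ∈ ℕ : there exists a surjective group homomorphism from PresentedGroup R_n onto Q^m } is recursively enumerable but not recursive. (This is part (2) of Theorem 1.1 of the paper, stated without the hyperbolicity and small-cancellation assertions of part (1).) -/

import Mathlib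

/-- A group is Hopfian if every surjective endomorphism is injective. -/
def IsHopfian (G : Type*) [Group G] : Prop :=
  ∀ φ : G →* G, Function.Surjective φ → Function.Injective φ

/-- The set of elements of a free group represented by a given list of words. -/
def wordsSet {Z : Type*} (L : List (List (Z × Bool))) : Set (FreeGroup Z) :=
  { w | ∃ l ∈ L, w = FreeGroup.mk l }

namespace UD

/-- A modular rewriting rule `(i; U; g + b V) ~ (i'; d + b U; V)`. -/
structure Rule (I : Type) where
  b : ℕ
  hb : 0 < b
  i : I
  g : ℕ
  i' : I
  d : ℕ

/-- One application of a rule. -/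
def RStep {I J : Type} (rules : J → Rule I) (p q : I × ℤ × ℤ) : Prop :=
  ∃ (j : J) (U V : ℤ), p = ((rules j).i, U, (rules j).g + (rules j).b * V) ∧
    q = ((rules j).i', (rules j).d + (rules j).b * U, V)

/-- The generators of the group attached to a rule system. -/
inductive Gen (I J : Type) where
  | xi1 | xi2 | eta1 | eta2 | s | k
  | t (i : I)
  | r (j : J)

/-- The index type of the relators. -/
inductive RelIx (J : Type) where
  | xy | kt
  | rx (j : J) | ry (j : J) | rt (j : J) | kr (j : J)

section words
variable {G I J : Type} [Group G] (v : Gen I J → G)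

/-- `x`. -/
def gX : G := v .xi1 * v .xi2
/-- `y`. -/
def gY : G := v .eta1 * v .eta2
/-- `r_j`. -/
def gR (j : J) : G := v .s * v (.r j)

/-- the relators, evaluated. -/
def relVal (rules : J → Rule I) (istar : I) : RelIx J → G
  | .xy => gX v * gY v * (gX v)⁻¹ * (gY v)⁻¹
  | .kt => v .k * v (.t istar) * (v .k)⁻¹ * (v (.t istar))⁻¹
  | .rx j => gR v j * gX v * (gR v j)⁻¹ * (gX v ^ (rules j).b)⁻¹
  | .ry j => gR v j * gY v ^ (rules j).b * (gR v j)⁻¹ * (gY v)⁻¹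
  | .rt j => gR v j * ((gY v ^ (rules j).g)⁻¹ * v (.t (rules j).i) * gY v ^ (rules j).g) *
      (gR v j)⁻¹ * ((gX v ^ (rules j).d)⁻¹ * v (.t (rules j).i') * gX v ^ (rules j).d)⁻¹
  | .kr j => v .k * gR v j * (v .k)⁻¹ * (gR v j)⁻¹

/-- the commutator of `y^{-N} t y^N` and `k`. -/
def commVal {G : Type} [Group G] (y t k : G) (N : ℕ) : G :=
  (y ^ N)⁻¹ * t * y ^ N * k * ((y ^ N)⁻¹ * t * y ^ N)⁻¹ * k⁻¹

/-- conjugate of `t_i`. -/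
def tAt (p : I × ℤ × ℤ) : G :=
  (gX v ^ p.2.1 * gY v ^ p.2.2)⁻¹ * v (.t p.1) * (gX v ^ p.2.1 * gY v ^ p.2.2)

theorem map_relVal {H : Type} [Group H] (f : G →* H) (rules : J → Rule I) (istar : I) (x : RelIx J) :
    f (relVal v rules istar x) = relVal (fun g => f (v g)) rules istar x := by
  cases x <;> simp [relVal, gX, gY, gR]

theorem map_commVal {G H : Type} [Group G] [Group H] (f : G →* H) (y t k : G) (N : ℕ) :
    f (commVal y t k N) = commVal (f y) (f t) (f k) N := by
  simp [commVal]

theorem conj_tAt (rules : J → Rule I) (istar : I) (h : ∀ x, relVal v rules istar x = 1)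
    {p q : I × ℤ × ℤ} (hpq : RStep rules p q) :
    ∃ j, gR v j * tAt v p * (gR v j)⁻¹ = tAt v q := by
  obtain ⟨j, U, V, rfl, rfl⟩ := hpq
  refine ⟨j, ?_⟩
  have hxy : Commute (gX v) (gY v) := by
    have := h .xy
    simp only [relVal] at this
    rw [mul_inv_eq_one, mul_inv_eq_iff_eq_mul] at this
    exact this
  have hx : MulAut.conj (gR v j) (gX v) = gX v ^ (rules j).b := by
    have := h (.rx j)
    simp only [relVal] at this
    rwa [mul_inv_eq_one] at this
  have hy : MulAut.conj (gR v j) (gY v ^ (rules j).b) = gY v := by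
    have := h (.ry j)
    simp only [relVal] at this
    rwa [mul_inv_eq_one] at this
  have ht : MulAut.conj (gR v j) ((gY v ^ (rules j).g)⁻¹ * v (.t (rules j).i) * gY v ^ (rules j).g)
      = ((gX v ^ (rules j).d)⁻¹ * v (.t (rules j).i') * gX v ^ (rules j).d) := by
    have := h (.rt j)
    simp only [relVal] at this
    rwa [mul_inv_eq_one] at this
  have e1 : tAt v ((rules j).i, U, (rules j).g + (rules j).b * V) =
      ((gY v ^ (rules j).b) ^ V)⁻¹ * ((gX v) ^ U)⁻¹ *
       ((gY v ^ (rules j).g)⁻¹ * v (.t (rules j).i) * gY v ^ (rules j).g) *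
        ((gX v) ^ U) * ((gY v ^ (rules j).b) ^ V) := by
    have hc : gX v ^ U * gY v ^ (((rules j).g : ℤ) + (rules j).b * V) =
       gY v ^ (rules j).g * gX v ^ U * (gY v ^ (rules j).b) ^ V := by
      rw [zpow_add, zpow_natCast, zpow_mul, zpow_natCast, ← mul_assoc]
      congr 1
      exact ((hxy.zpow_left U).pow_right _).eq
    simp only [tAt, hc]
    group
  have e2 : tAt v ((rules j).i', (rules j).d + (rules j).b * U, V) =
      (gY v ^ V)⁻¹ * ((gX v ^ (rules j).b) ^ U)⁻¹ *
       ((gX v ^ (rules j).d)⁻¹ * v (.t (rules j).i') * gX v ^ (rules j).d) *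
        ((gX v ^ (rules j).b) ^ U) * (gY v ^ V) := by
    have hc : gX v ^ (((rules j).d : ℤ) + (rules j).b * U) * gY v ^ V =
       gX v ^ (rules j).d * (gX v ^ (rules j).b) ^ U * gY v ^ V := by
      rw [zpow_add, zpow_natCast, zpow_mul, zpow_natCast]
    simp only [tAt, hc]
    group
  rw [← MulAut.conj_apply, e1, e2]
  simp only [map_mul, map_inv, map_zpow] at hx hy ht ⊢
  rw [hx, hy, ht]

theorem commVal_eq_one (rules : J → Rule I) (istar i0 : I) (h : ∀ x, relVal v rules istar x = 1)
    (N : ℕ) (hN : Relation.EqvGen (RStep rules) (i0, 0, (N : ℤ)) (istar, 0, 0)) :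
    commVal (gY v) (v (.t i0)) (v .k) N = 1 := by
  have key : ∀ p q, Relation.EqvGen (RStep rules) p q →
      (Commute (v .k) (tAt v p) ↔ Commute (v .k) (tAt v q)) := by
    intro p q hpq
    induction hpq with
    | rel p q hpq =>
      obtain ⟨j, hj⟩ := conj_tAt v rules istar h hpq
      have hkr : Commute (v .k) (gR v j) := by
        have := h (.kr j)
        simp only [relVal] at this
        rw [mul_inv_eq_one, mul_inv_eq_iff_eq_mul] at this
        exact this
      constructor
      · intro hc
        rw [← hj]
        exact (hkr.mul_right hc).mul_right hkr.inv_right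
      · intro hc
        have : tAt v p = (gR v j)⁻¹ * tAt v q * gR v j := by rw [← hj]; group
        rw [this]
        exact (hkr.inv_right.mul_right hc).mul_right hkr
    | refl => rfl
    | symm _ _ _ ih => exact ih.symm
    | trans _ _ _ _ _ ih1 ih2 => exact ih1.trans ih2
  have h0 : Commute (v .k) (tAt v (istar, 0, 0)) := by
    have := h .kt
    simp only [relVal] at this
    rw [mul_inv_eq_one, mul_inv_eq_iff_eq_mul] at this
    have h' : Commute (v .k) (v (.t istar)) := this
    simpa [tAt] using h'
  have h1 := (key _ _ hN).2 h0
  simp only [tAt, zpow_zero, one_mul, zpow_natCast] at h1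
  rw [commVal, mul_inv_eq_one, mul_inv_eq_iff_eq_mul]
  exact h1.symm.eq

end words

section model
variable {I : Type}

/-- The model set. -/
abbrev Om (I : Type) := (ℤ × ℤ) × Bool × (I × ℤ × ℤ → Bool)

/-- act on the position only -/
def posP (e : Equiv.Perm (ℤ × ℤ)) : Equiv.Perm (Om I) where
  toFun w := (e w.1, w.2)
  invFun w := (e.symm w.1, w.2)
  left_inv w := by simp
  right_inv w := by simp

/-- the action of `t_i`. -/
def tP (i : I) : Equiv.Perm (Om I) where
  toFun w := (w.1, xor w.2.1 (w.2.2 (i, w.1)), w.2.2)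
  invFun w := (w.1, xor w.2.1 (w.2.2 (i, w.1)), w.2.2)
  left_inv w := by simp
  right_inv w := by simp

def xP : Equiv.Perm (Om I) := posP (Equiv.addRight ((1 : ℤ), (0 : ℤ)))
def yP : Equiv.Perm (Om I) := posP (Equiv.addRight ((0 : ℤ), (1 : ℤ)))

theorem xP_pow (n : ℕ) (w : Om I) : (xP ^ n) w = (w.1 + ((n : ℤ), (0 : ℤ)), w.2) := by
  induction n with
  | zero => simp [Prod.ext_iff]
  | succ n ih =>
    rw [pow_succ', Equiv.Perm.mul_apply, ih]
    simp [xP, posP, Prod.ext_iff, add_assoc]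

theorem yP_pow (n : ℕ) (w : Om I) : (yP ^ n) w = (w.1 + ((0 : ℤ), (n : ℤ)), w.2) := by
  induction n with
  | zero => simp [Prod.ext_iff]
  | succ n ih =>
    rw [pow_succ', Equiv.Perm.mul_apply, ih]
    simp [yP, posP, Prod.ext_iff, add_assoc]

/-- the position change for stable letters -/
def thetaP (b : ℕ) (hb : 0 < b) : Equiv.Perm (ℤ × ℤ) where
  toFun w := (b * w.1 + w.2 % b, w.2 / b)
  invFun w := (w.1 / b, w.1 % b + b * w.2)
  left_inv w := by
    have hb' : (b : ℤ) ≠ 0 := by exact_mod_cast hb.ne'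
    have h0 := Int.emod_nonneg w.2 hb'
    have h1 := Int.emod_lt_of_pos w.2 (by exact_mod_cast hb : (0:ℤ) < b)
    ext
    · simp only
      rw [add_comm, Int.add_mul_ediv_left _ _ hb', Int.ediv_eq_zero_of_lt h0 h1, zero_add]
    · simp only
      rw [Int.mul_add_emod_self_left, Int.emod_emod_of_dvd _ (dvd_refl _), Int.emod_add_mul_ediv]
  right_inv w := by
    have hb' : (b : ℤ) ≠ 0 := by exact_mod_cast hb.ne'
    have h0 := Int.emod_nonneg w.1 hb'
    have h1 := Int.emod_lt_of_pos w.1 (by exact_mod_cast hb : (0:ℤ) < b)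
    ext
    · simp only
      rw [Int.add_mul_emod_self_left, Int.emod_emod_of_dvd _ (dvd_refl _), Int.mul_ediv_add_emod]
    · simp only
      rw [Int.add_mul_ediv_left _ _ hb', Int.ediv_eq_zero_of_lt h0 h1, zero_add]

theorem thetaP_x (b : ℕ) (hb : 0 < b) (w : ℤ × ℤ) :
    thetaP b hb (w + ((1 : ℤ), (0 : ℤ))) = thetaP b hb w + ((b : ℤ), (0 : ℤ)) := by
  simp [thetaP, Prod.ext_iff]; ring

theorem thetaP_y (b : ℕ) (hb : 0 < b) (w : ℤ × ℤ) :
    thetaP b hb (w + ((0 : ℤ), (b : ℤ))) = thetaP b hb w + ((0 : ℤ), (1 : ℤ)) := by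
  have hb' : (b : ℤ) ≠ 0 := by exact_mod_cast hb.ne'
  simp [thetaP, Prod.ext_iff, Int.add_ediv_of_dvd_right, Int.ediv_self hb']

open Classical in
/-- existence of the stable letter -/
theorem exists_r (R : Rule I) (chi : I × ℤ × ℤ → Bool)
    (hchi : ∀ U V : ℤ, chi (R.i, U, R.g + R.b * V) = chi (R.i', R.d + R.b * U, V)) :
    ∃ r : Equiv.Perm (Om I), r ((0, 0), false, chi) = ((0, 0), false, chi) ∧
      r * xP * r⁻¹ = xP ^ R.b ∧ r * yP ^ R.b * r⁻¹ = yP ∧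
      r * ((yP ^ R.g)⁻¹ * tP R.i * yP ^ R.g) * r⁻¹ = ((xP ^ R.d)⁻¹ * tP R.i' * xP ^ R.d) := by
  let Th : Equiv.Perm (I × ℤ × ℤ) :=
    (Equiv.swap R.i R.i').prodCongr
      (((Equiv.addRight ((0 : ℤ), -(R.g : ℤ))).trans (thetaP R.b R.hb)).trans
        (Equiv.addRight ((R.d : ℤ), (0 : ℤ))))
  have hTh : ∀ w : ℤ × ℤ, Th (R.i, w + (0, (R.g : ℤ))) = (R.i', thetaP R.b R.hb w + ((R.d:ℤ), 0)) := by
    intro w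
    simp [Th, Prod.ext_iff]
  let fP : Equiv.Perm (I × ℤ × ℤ → Bool) := Equiv.arrowCongr Th (Equiv.refl _)
  have hfP : ∀ f p, fP f (Th p) = f p := by
    intro f p
    simp [fP, Equiv.arrowCongr]
  let r0 : Equiv.Perm (Om I) := (thetaP R.b R.hb).prodCongr ((Equiv.refl _).prodCongr fP)
  have hr0 : ∀ w : Om I, r0 w = (thetaP R.b R.hb w.1, w.2.1, fP w.2.2) := fun w => rfl
  -- the correction
  let sw : Equiv.Perm (I × ℤ × ℤ → Bool) := Equiv.swap (fP chi) chi
  let kap : Equiv.Perm (Om I) :=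
    { toFun := fun w => (w.1, w.2.1, if (R.b : ℤ) ∣ w.1.1 then sw w.2.2 else w.2.2)
      invFun := fun w => (w.1, w.2.1, if (R.b : ℤ) ∣ w.1.1 then sw w.2.2 else w.2.2)
      left_inv := by intro w; by_cases h : (R.b : ℤ) ∣ w.1.1 <;> simp [h, sw]
      right_inv := by intro w; by_cases h : (R.b : ℤ) ∣ w.1.1 <;> simp [h, sw] }
  have hkap : ∀ w : Om I, kap w = (w.1, w.2.1, if (R.b : ℤ) ∣ w.1.1 then sw w.2.2 else w.2.2) :=
    fun w => rfl
  have hb' : (R.b : ℤ) ≠ 0 := by exact_mod_cast R.hb.ne'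
  have hkt : ∀ (w : Om I), (R.b : ℤ) ∣ w.1.1 →
      (sw w.2.2) (R.i', w.1 + ((R.d:ℤ), 0)) = w.2.2 (R.i', w.1 + ((R.d:ℤ), 0)) := by
    intro w hw
    have key : fP chi (R.i', w.1 + ((R.d:ℤ), 0)) = chi (R.i', w.1 + ((R.d:ℤ), 0)) := by
      obtain ⟨U, hU⟩ := hw
      obtain ⟨⟨w1, w2⟩, w3⟩ := w
      simp only at hU
      subst hU
      have e : ((R.b : ℤ) * U, w2) = thetaP R.b R.hb (U, R.b * w2) := by
        simp [thetaP, Int.mul_ediv_cancel_left _ hb']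
      have h1 := hTh (U, R.b * w2)
      rw [← e] at h1
      simp only
      rw [← h1, hfP, h1]
      have h2 := hchi U w2
      simpa [Prod.mk_add_mk, add_comm] using h2
    by_cases h1 : w.2.2 = fP chi
    · rw [h1]; simp [sw, key]
    · by_cases h2 : w.2.2 = chi
      · rw [h2]; simp [sw, key]
      · simp only [sw]
        rw [Equiv.swap_apply_of_ne_of_ne h1 h2]
  refine ⟨kap * r0, ?_, ?_, ?_, ?_⟩
  · simp [Equiv.Perm.mul_apply, hr0, hkap, thetaP, sw]
  · rw [mul_inv_eq_iff_eq_mul]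
    ext1 w
    simp only [Equiv.Perm.mul_apply, xP_pow]
    have : xP w = (w.1 + (1, 0), w.2) := rfl
    rw [this, hr0, hr0, hkap, hkap]
    simp [thetaP_x, Prod.ext_iff]
  · rw [mul_inv_eq_iff_eq_mul]
    ext1 w
    simp only [Equiv.Perm.mul_apply, yP_pow]
    rw [hr0, hr0, hkap, hkap]
    have : ∀ w : Om I, yP w = (w.1 + (0, 1), w.2) := fun _ => rfl
    rw [this]
    simp [thetaP_y, Prod.ext_iff]
  · rw [mul_inv_eq_iff_eq_mul]
    have e1 : ∀ w : Om I, ((yP ^ R.g)⁻¹ * tP R.i * yP ^ R.g : Equiv.Perm (Om I)) w =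
        (w.1, xor w.2.1 (w.2.2 (R.i, w.1 + (0, (R.g:ℤ)))), w.2.2) := by
      intro w
      rw [Equiv.Perm.mul_apply, Equiv.Perm.mul_apply, Equiv.Perm.inv_eq_iff_eq, yP_pow, yP_pow]
      rfl
    have e2 : ∀ w : Om I, ((xP ^ R.d)⁻¹ * tP R.i' * xP ^ R.d : Equiv.Perm (Om I)) w =
        (w.1, xor w.2.1 (w.2.2 (R.i', w.1 + ((R.d:ℤ), 0))), w.2.2) := by
      intro w
      rw [Equiv.Perm.mul_apply, Equiv.Perm.mul_apply, Equiv.Perm.inv_eq_iff_eq, xP_pow, xP_pow]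
      rfl
    ext1 w
    rw [Equiv.Perm.mul_apply, Equiv.Perm.mul_apply, e1, Equiv.Perm.mul_apply _ (kap * r0), e2]
    simp only [Equiv.Perm.mul_apply]
    rw [hr0, hr0, hkap, hkap]
    simp only
    have e3 : (fP w.2.2) (R.i', thetaP R.b R.hb w.1 + ((R.d:ℤ), 0)) = w.2.2 (R.i, w.1 + (0, (R.g:ℤ))) := by
      rw [← hTh, hfP]
    by_cases h : (R.b : ℤ) ∣ (thetaP R.b R.hb w.1).1
    · have := hkt (thetaP R.b R.hb w.1, w.2.1, fP w.2.2) h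
      simp only at this
      simp only [h, if_true]
      rw [this, e3]
    · simp only [h, if_false]
      rw [e3]

/-- sheet-0 action. -/
def shP {A : Type} : Equiv.Perm A →* Equiv.Perm (A × Bool × Bool) where
  toFun g :=
    { toFun := fun w => if w.2.1 then w else (g w.1, w.2)
      invFun := fun w => if w.2.1 then w else (g⁻¹ w.1, w.2)
      left_inv := by rintro ⟨w, a, b⟩; cases a <;> simp
      right_inv := by rintro ⟨w, a, b⟩; cases a <;> simp }
  map_one' := by ext1 ⟨w, a, b⟩; cases a <;> simp
  map_mul' g h := by ext1 ⟨w, a, b⟩; cases a <;> simp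

def rhP {A : Type} (r : Equiv.Perm A) : Equiv.Perm (A × Bool × Bool) where
  toFun w := if w.2.1 then (r⁻¹ w.1, false, w.2.2) else (r w.1, true, w.2.2)
  invFun w := if w.2.1 then (r⁻¹ w.1, false, w.2.2) else (r w.1, true, w.2.2)
  left_inv := by rintro ⟨w, a, b⟩; cases a <;> simp
  right_inv := by rintro ⟨w, a, b⟩; cases a <;> simp

open Classical in
noncomputable def kP {A : Type} (p : A) : Equiv.Perm (A × Bool × Bool) where
  toFun w := if w.1 = p ∧ w.2.1 = false then (w.1, w.2.1, !w.2.2) else w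
  invFun w := if w.1 = p ∧ w.2.1 = false then (w.1, w.2.1, !w.2.2) else w
  left_inv := by rintro ⟨w, a, b⟩; by_cases h : w = p ∧ a = false <;> simp [h]
  right_inv := by rintro ⟨w, a, b⟩; by_cases h : w = p ∧ a = false <;> simp [h]

theorem rh_conj {A : Type} (r g : Equiv.Perm A) :
    (rhP 1 * rhP r) * shP g * (rhP 1 * rhP r)⁻¹ = shP (r * g * r⁻¹) := by
  rw [mul_inv_eq_iff_eq_mul]
  ext1 ⟨w, a, b⟩; cases a <;> simp [rhP, shP]

theorem sh_conj_k {A : Type} (g : Equiv.Perm A) (p : A) :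
    shP g * kP p * (shP g)⁻¹ = kP (g p) := by
  rw [mul_inv_eq_iff_eq_mul]
  ext1 ⟨w, a, b⟩
  cases a <;> by_cases h : w = p <;> simp [kP, shP, h]

theorem rh_comm_k {A : Type} (r : Equiv.Perm A) (p : A) (h : r p = p) :
    kP p * (rhP 1 * rhP r) * (kP p)⁻¹ * (rhP 1 * rhP r)⁻¹ = 1 := by
  rw [mul_inv_eq_one, mul_inv_eq_iff_eq_mul]
  ext1 ⟨w, a, b⟩
  have h' : ∀ w, r w = p ↔ w = p := fun w => by
    constructor
    · intro e; rw [← h] at e; exact r.injective e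
    · rintro rfl; exact h
  cases a <;> by_cases e : w = p <;> simp [kP, rhP, e, h, h']

theorem kP_comm {A : Type} (p q : A) : kP p * kP q = kP q * kP p := by
  ext1 ⟨w, a, b⟩
  by_cases h : w = p
  · subst h
    by_cases h' : w = q
    · subst h'; rfl
    · cases a <;> simp [kP, h']
  · by_cases h' : w = q
    · subst h'
      cases a <;> simp [kP, h]
    · cases a <;> simp [kP, h, h']

theorem kP_sq {A : Type} (p : A) : kP p * kP p = 1 := by
  ext1 ⟨w, a, b⟩
  cases a <;> by_cases h : w = p <;> simp [kP, h]

theorem kP_inj {A : Type} {p q : A} (h : kP p = kP q) : p = q := by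
  by_contra hne
  have := congrArg (fun e => e (p, false, false)) h
  simp [kP, hne] at this

/-- Existence of a model when the points are not equivalent. -/
theorem exists_model {I J : Type} (rules : J → Rule I) (istar i0 : I) (N : ℕ)
    (hN : ¬ Relation.EqvGen (RStep rules) (i0, 0, (N : ℤ)) (istar, 0, 0)) :
    ∃ (G : Type) (_ : Group G) (v : Gen I J → G), (∀ g, v g * v g = 1) ∧
      (∀ x, relVal v rules istar x = 1) ∧
      commVal (gY v) (v (.t i0)) (v .k) N ≠ 1 ∧
      commVal (gY v) (v (.t i0)) (v .k) N * commVal (gY v) (v (.t i0)) (v .k) N = 1 := by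
  classical
  let chi : I × ℤ × ℤ → Bool :=
    fun p => !decide (Relation.EqvGen (RStep rules) p (istar, 0, 0))
  have hchi : ∀ j, ∀ U V : ℤ, chi ((rules j).i, U, (rules j).g + (rules j).b * V) =
      chi ((rules j).i', (rules j).d + (rules j).b * U, V) := by
    intro j U V
    have hs : RStep rules ((rules j).i, U, (rules j).g + (rules j).b * V)
      ((rules j).i', (rules j).d + (rules j).b * U, V) := ⟨j, U, V, rfl, rfl⟩
    simp only [chi]
    congr 2
    apply propext
    constructor
    · intro h
      exact .trans _ _ _ (.symm _ _ (.rel _ _ hs)) h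
    · intro h
      exact .trans _ _ _ (.rel _ _ hs) h
  choose r hr0 hrx hry hrt using fun j => exists_r (rules j) chi (hchi j)
  let p : Om I := ((0, 0), false, chi)
  let neg1 : Equiv.Perm (ℤ × ℤ) := (Equiv.subLeft (1 : ℤ)).prodCongr (Equiv.refl ℤ)
  let neg2 : Equiv.Perm (ℤ × ℤ) := (Equiv.neg ℤ).prodCongr (Equiv.refl ℤ)
  let neg3 : Equiv.Perm (ℤ × ℤ) := (Equiv.refl ℤ).prodCongr (Equiv.subLeft (1 : ℤ))
  let neg4 : Equiv.Perm (ℤ × ℤ) := (Equiv.refl ℤ).prodCongr (Equiv.neg ℤ)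
  let v : Gen I J → Equiv.Perm (Om I × Bool × Bool) := fun g =>
    match g with
    | .xi1 => shP (posP neg1)
    | .xi2 => shP (posP neg2)
    | .eta1 => shP (posP neg3)
    | .eta2 => shP (posP neg4)
    | .s => rhP 1
    | .k => kP p
    | .t i => shP (tP i)
    | .r j => rhP (r j)
  have hX : gX v = shP xP := by
    simp only [gX, v]
    rw [← map_mul]
    congr 1
    ext1 w
    simp [posP, xP, neg1, neg2, Prod.ext_iff, add_comm]
  have hY : gY v = shP yP := by
    simp only [gY, v]
    rw [← map_mul]
    congr 1
    ext1 w
    simp [posP, yP, neg3, neg4, Prod.ext_iff, add_comm]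
  have hR : ∀ j, gR v j = rhP 1 * rhP (r j) := fun j => rfl
  have htp : ∀ i : I, v (.t i) = shP (tP i) := fun i => rfl
  have hk : v .k = kP p := rfl
  refine ⟨Equiv.Perm (Om I × Bool × Bool), inferInstance, v, ?_, ?_, ?_⟩
  · have h2 : ∀ e : Equiv.Perm (Om I), e * e = 1 → shP e * shP e = 1 := by
      intro e he; rw [← map_mul, he, map_one]
    intro g
    cases g with
    | xi1 => exact h2 _ (by ext1 w; simp [posP, neg1, Prod.ext_iff])
    | xi2 => exact h2 _ (by ext1 w; simp [posP, neg2, Prod.ext_iff])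
    | eta1 => exact h2 _ (by ext1 w; simp [posP, neg3, Prod.ext_iff])
    | eta2 => exact h2 _ (by ext1 w; simp [posP, neg4, Prod.ext_iff])
    | s => ext1 ⟨w, a, b⟩; cases a <;> simp [v, rhP]
    | k => exact kP_sq p
    | t i => exact h2 _ (by ext1 w; simp [tP])
    | r j => ext1 ⟨w, a, b⟩; cases a <;> simp [v, rhP]
  · intro x
    cases x with
    | xy =>
      simp only [relVal, hX, hY]
      rw [mul_inv_eq_one, mul_inv_eq_iff_eq_mul, ← map_mul, ← map_mul]
      congr 1
      ext1 w
      simp [posP, xP, yP, Prod.ext_iff]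
    | kt =>
      simp only [relVal, htp, hk]
      have := sh_conj_k (tP istar) p
      have hp : tP istar p = p := by
        have : chi (istar, 0, 0) = false := by
          simp only [chi]; simp [Relation.EqvGen.refl]
        simp [tP, p, this]
      rw [hp, mul_inv_eq_iff_eq_mul] at this
      rw [mul_inv_eq_one, mul_inv_eq_iff_eq_mul, this]
    | rx j =>
      simp only [relVal, hR, hX]
      rw [rh_conj, hrx, map_pow, mul_inv_cancel]
    | ry j =>
      simp only [relVal, hR, hY]
      rw [← map_pow, rh_conj, hry, mul_inv_cancel]
    | rt j =>
      simp only [relVal, hR, hY, hX, htp]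
      have : (shP yP ^ (rules j).g)⁻¹ * shP (tP (rules j).i) * shP yP ^ (rules j).g =
        shP ((yP ^ (rules j).g)⁻¹ * (tP (rules j).i) * yP ^ (rules j).g) := by simp
      rw [this, rh_conj, hrt]
      simp
    | kr j =>
      simp only [relVal, hR, hk]
      exact rh_comm_k _ _ (hr0 j)
  · let tau : Equiv.Perm (Om I) := (yP ^ N)⁻¹ * tP i0 * yP ^ N
    have hc : commVal (gY v) (v (.t i0)) (v .k) N = kP (tau p) * (kP p)⁻¹ := by
      simp only [commVal, hY, htp, hk]
      rw [← sh_conj_k tau p]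
      simp [tau]
    have htau : tau p = ((0, 0), true, chi) := by
      have : chi (i0, 0, (N : ℤ)) = true := by
        simp only [chi]; simp [hN]
      simp only [tau]
      rw [Equiv.Perm.mul_apply, Equiv.Perm.mul_apply, Equiv.Perm.inv_eq_iff_eq, yP_pow, yP_pow]
      simp [tP, p, this]
    have hne : tau p ≠ p := by
      rw [htau]; simp [p]
    rw [hc]
    constructor
    · intro h
      rw [mul_inv_eq_one] at h
      exact hne (kP_inj h)
    · have hi : (kP p)⁻¹ = kP p := inv_eq_of_mul_eq_one_left (kP_sq p)
      rw [hi]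
      calc kP (tau p) * kP p * (kP (tau p) * kP p) = kP (tau p) * (kP p * kP (tau p)) * kP p := by group
        _ = (kP (tau p) * kP (tau p)) * (kP p * kP p) := by rw [kP_comm p]; group
        _ = 1 := by rw [kP_sq, kP_sq, one_mul]

end model

end UD

namespace UD

open Equiv.Perm in
theorem gen_alt (Ps : Type) [Fintype Ps] [DecidableEq Ps] (hP : (Fintype.card Ps).Prime)
    (h5 : 5 ≤ Fintype.card Ps) (q : Equiv.Perm Ps) (hq : q.IsThreeCycle) :
    ∃ p : Equiv.Perm Ps, p ∈ alternatingGroup Ps ∧ p ^ (Fintype.card Ps) = 1 ∧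
      Subgroup.closure {p, q} = alternatingGroup Ps := by
  set P := Fintype.card Ps with hPdef
  haveI : NeZero P := ⟨hP.ne_zero⟩
  let e : Ps ≃ ZMod P := (Fintype.equivFin Ps).trans (ZMod.finEquiv P).toEquiv
  let p : Equiv.Perm Ps := (e.trans (Equiv.addRight (1 : ZMod P))).trans e.symm
  have hpn : ∀ (n : ℕ) x, (p ^ n) x = e.symm (e x + n) := by
    intro n
    induction n with
    | zero => intro x; simp
    | succ n ih =>
      intro x
      rw [pow_succ', Equiv.Perm.mul_apply, ih]
      simp [p, add_assoc]
  have hpP : p ^ P = 1 := by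
    ext1 x
    rw [hpn]; simp
  have hpa : p ∈ alternatingGroup Ps := by
    rw [mem_alternatingGroup]
    have h1 : (sign p) ^ P = 1 := by rw [← map_pow, hpP, map_one]
    have hodd : Odd P := hP.odd_of_ne_two (by omega)
    rcases Int.units_eq_one_or (sign p) with h | h
    · exact h
    · rw [h, hodd.neg_one_pow] at h1
      exact absurd h1 (by decide)
  refine ⟨p, hpa, hpP, le_antisymm ?_ ?_⟩
  · rw [Subgroup.closure_le]
    rintro x (rfl | rfl)
    · exact hpa
    · exact hq.mem_alternatingGroup
  · set G := Subgroup.closure {p, q} with hG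
    have hpG : p ∈ G := Subgroup.subset_closure (by simp)
    have hqG : q ∈ G := Subgroup.subset_closure (by simp)
    haveI : MulAction.IsPretransitive G Ps := by
      constructor
      intro x y
      refine ⟨⟨p ^ (e y - e x).val, pow_mem hpG _⟩, ?_⟩
      change (p ^ (e y - e x).val) x = y
      rw [hpn]; simp
    have hprim : MulAction.IsPreprimitive G Ps := by
      apply MulAction.IsPreprimitive.of_prime_card
      rw [Nat.card_eq_fintype_card]; exact hP
    exact alternatingGroup_le_of_isPreprimitive_of_isThreeCycle_mem hprim hq hqG

section label
variable {Y Ph E : Type}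

/-- Permutations of the second factor. -/
def actP : Equiv.Perm ((Bool × Ph) ⊕ E) →* Equiv.Perm (Y × ((Bool × Ph) ⊕ E)) where
  toFun g := Equiv.prodCongr (Equiv.refl Y) g
  map_one' := by ext1 x; simp
  map_mul' g h := rfl

theorem actP_apply (g : Equiv.Perm ((Bool × Ph) ⊕ E)) (x) :
    (actP g : Equiv.Perm (Y × ((Bool × Ph) ⊕ E))) x = (x.1, g x.2) := rfl

/-- label function -/
def labF (F : Ph → Equiv.Perm (Y × Bool)) (x : Y × ((Bool × Ph) ⊕ E)) : Y × ((Bool × Ph) ⊕ E) :=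
  match x with
  | (y, .inl (b, f)) => ((F f (y, b)).1, .inl ((F f (y, b)).2, f))
  | (y, .inr e) => (y, .inr e)

/-- label hom -/
def labP : (Ph → Equiv.Perm (Y × Bool)) →* Equiv.Perm (Y × ((Bool × Ph) ⊕ E)) where
  toFun F :=
    { toFun := labF F
      invFun := labF F⁻¹
      left_inv := by rintro ⟨y, ⟨b, f⟩ | e⟩ <;> simp [labF]
      right_inv := by rintro ⟨y, ⟨b, f⟩ | e⟩ <;> simp [labF] }
  map_one' := by ext1 ⟨y, ⟨b, f⟩ | e⟩ <;> simp [labF]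
  map_mul' g h := by ext1 ⟨y, ⟨b, f⟩ | e⟩ <;> simp [labF]

theorem labP_inl (F : Ph → Equiv.Perm (Y × Bool)) (y : Y) (b : Bool) (f : Ph) :
    (labP F : Equiv.Perm (Y × ((Bool × Ph) ⊕ E))) (y, .inl (b, f)) =
      ((F f (y, b)).1, .inl ((F f (y, b)).2, f)) := rfl

theorem labP_inr (F : Ph → Equiv.Perm (Y × Bool)) (y : Y) (e : E) :
    (labP F : Equiv.Perm (Y × ((Bool × Ph) ⊕ E))) (y, .inr e) = (y, .inr e) := rfl

/-- block permutations -/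
def blkP (s : Equiv.Perm Ph) : Equiv.Perm ((Bool × Ph) ⊕ E) :=
  Equiv.Perm.sumCongr (Equiv.prodCongrRight (fun _ : Bool => s)) 1

theorem blk_lab (s : Equiv.Perm Ph) (F : Ph → Equiv.Perm (Y × Bool)) :
    (actP (blkP s) * labP F * (actP (blkP s))⁻¹ : Equiv.Perm (Y × ((Bool × Ph) ⊕ E))) =
      labP (fun f => F (s⁻¹ f)) := by
  rw [mul_inv_eq_iff_eq_mul]
  ext1 ⟨y, ⟨b, f⟩ | e⟩
  · simp only [Equiv.Perm.mul_apply, labP_inl, actP_apply]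
    simp only [blkP, Equiv.Perm.sumCongr_apply, Sum.map_inl, Equiv.prodCongrRight_apply, labP_inl]
    simp
  · simp only [Equiv.Perm.mul_apply, labP_inr, actP_apply]
    simp only [blkP, Equiv.Perm.sumCongr_apply, Sum.map_inr, labP_inr]

theorem sign_blk [Fintype Ph] [DecidableEq Ph] [Fintype E] [DecidableEq E] (s : Equiv.Perm Ph) :
    blkP s ∈ alternatingGroup ((Bool × Ph) ⊕ E) := by
  rw [Equiv.Perm.mem_alternatingGroup, blkP, Equiv.Perm.sign_sumCongr,
    Equiv.Perm.sign_prodCongrRight]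
  simp

/-- the flip -/
def flipP (S : Ph → Bool) : Equiv.Perm ((Bool × Ph) ⊕ E) :=
  Equiv.Perm.sumCongr (Equiv.prodCongrLeft (fun f => if S f then Equiv.swap false true else 1)) 1

theorem act_flip (S : Ph → Bool) (fl : Equiv.Perm (Y × Bool)) (hfl : ∀ y b, fl (y, b) = (y, !b)) :
    (actP (flipP S) : Equiv.Perm (Y × ((Bool × Ph) ⊕ E))) = labP (fun f => if S f then fl else 1) := by
  ext1 ⟨y, ⟨b, f⟩ | e⟩
  · rw [actP_apply, labP_inl]
    cases h : S f <;> cases b <;> simp [flipP, h, hfl]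
  · simp [actP_apply, labP_inr, flipP]

theorem sign_flip [Fintype Ph] [DecidableEq Ph] [Fintype E] [DecidableEq E] (S : Ph → Bool)
    (a b : Ph) (hab : a ≠ b) (hS : ∀ f, S f = true ↔ f = a ∨ f = b) :
    flipP S ∈ alternatingGroup ((Bool × Ph) ⊕ E) := by
  rw [Equiv.Perm.mem_alternatingGroup, flipP, Equiv.Perm.sign_sumCongr,
    Equiv.Perm.sign_prodCongrLeft]
  have : ∀ f, Equiv.Perm.sign (if S f = true then Equiv.swap false true else 1) =
      if f ∈ ({a, b} : Finset Ph) then (-1 : ℤˣ) else 1 := by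
    intro f
    by_cases h : S f = true
    · have := (hS f).1 h
      simp only [h, if_true]
      rw [if_pos (by simpa using this)]
      exact Equiv.Perm.sign_swap (by decide)
    · have h2 := fun h' => h ((hS f).2 h')
      have h3 : f ∉ ({a, b} : Finset Ph) := by
        rw [Finset.mem_insert, Finset.mem_singleton]; exact h2
      rw [if_neg h, if_neg h3, map_one]
  simp only [this]
  rw [Finset.prod_ite_mem]
  simp [Finset.card_pair hab]

theorem act_three_comm_lab (q : Equiv.Perm E) (F : Ph → Equiv.Perm (Y × Bool)) :
    Commute (actP (Equiv.Perm.sumCongr 1 q) : Equiv.Perm (Y × ((Bool × Ph) ⊕ E))) (labP F) := by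
  change _ * _ = _ * _
  ext1 ⟨y, ⟨b, f⟩ | e⟩
  · simp [actP_apply, labP_inl]
  · simp [actP_apply, labP_inr]

theorem actP_inj [Nonempty Y] (g : Equiv.Perm ((Bool × Ph) ⊕ E))
    (h : (actP g : Equiv.Perm (Y × ((Bool × Ph) ⊕ E))) = 1) : g = 1 := by
  ext1 x
  obtain ⟨y⟩ := ‹Nonempty Y›
  have := congrArg (fun e => (e (y, x)).2) h
  simpa [actP_apply] using this

end label

theorem exists_rep (G : Type) [Group G] (w : G) (hw : w ≠ 1) (hw2 : w * w = 1) :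
    ∃ (Y : Type) (_ : Nonempty Y) (rho : G →* Equiv.Perm (Y × Bool)),
      ∀ y b, rho w (y, b) = (y, !b) := by
  classical
  let Z := Subgroup.zpowers w
  let f : (G ⧸ Z) × Bool → G := fun x => x.1.out * (if x.2 then w else 1)
  have hf : Function.Bijective f := by
    constructor
    · rintro ⟨q, b⟩ ⟨q', b'⟩ h
      have hq : ∀ x : (G ⧸ Z) × Bool, ((f x : G) : G ⧸ Z) = x.1 := by
        rintro ⟨x, b⟩
        have : ((x.out : G) : G ⧸ Z) = x := Quotient.out_eq' x
        conv_rhs => rw [← this]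
        simp only [f]
        rw [QuotientGroup.eq]
        cases b
        · simp
        · simp [Z]
      have h1 : q = q' := by
        have := congrArg (fun g : G => (g : G ⧸ Z)) h
        simp only [hq] at this
        exact this
      subst h1
      simp only [f, mul_right_inj] at h
      cases b <;> cases b' <;> simp_all
    · intro g
      obtain ⟨⟨h, hh⟩, e⟩ := QuotientGroup.mk_out_eq_mul Z g
      obtain ⟨n, rfl⟩ := Subgroup.mem_zpowers_iff.1 hh
      have hz : w ^ n = 1 ∨ w ^ n = w := by
        rcases Int.even_or_odd' n with ⟨k, rfl | rfl⟩
        · left; rw [zpow_mul, zpow_two, hw2, one_zpow]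
        · right; rw [zpow_add, zpow_mul, zpow_two, hw2, one_zpow]; simp
      rcases hz with h | h
      · refine ⟨((g : G ⧸ Z), false), ?_⟩
        simp only [f, e, h]; simp
      · refine ⟨((g : G ⧸ Z), true), ?_⟩
        simp only [f, e, h]; simp [mul_assoc, hw2]
  let e := Equiv.ofBijective f hf
  have he : ∀ q b, e (q, b) * w = e (q, !b) := by
    intro q b
    change f (q, b) * w = f (q, !b)
    cases b <;> simp [f, mul_assoc, hw2]
  refine ⟨G ⧸ Z, inferInstance, 
    { toFun := fun g => (e.trans (Equiv.mulRight g⁻¹)).trans e.symm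
      map_one' := by ext1 x; simp
      map_mul' := fun g h => by ext1 x; simp [mul_assoc] }, ?_⟩
  intro y b
  have hi : w⁻¹ = w := inv_eq_of_mul_eq_one_left hw2
  simp only [MonoidHom.coe_mk, OneHom.coe_mk, Equiv.trans_apply, Equiv.coe_mulRight, hi, he]
  simp

end UD
namespace UD
section labels
variable {ι : Type}
abbrev PhT (ι : Type) := Option ι × Fin 3
abbrev PsT (ι : Type) (s : ℕ) := (Bool × PhT ι) ⊕ Fin (s + 3)

/-- the labelling by the generators -/
def hlab {M : Type} [One M] (x : ι → M) (f : PhT ι) : M :=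
  match f with
  | (none, _) => 1
  | (some i, j) => if j = 2 then 1 else x i

/-- position permutations -/
def alP : Equiv.Perm (PhT ι) := Equiv.prodCongr (Equiv.refl _) (Equiv.swap 1 2)
/-- position permutations -/
def beP : Equiv.Perm (PhT ι) := Equiv.prodCongr (Equiv.refl _) (Equiv.swap 0 2)

open Classical in
/-- position permutations -/
noncomputable def piP (i : ι) : Equiv.Perm (PhT ι) := Equiv.swap (some i, 1) (some i, 2)

open Classical in
/-- position permutations -/
noncomputable def muP (i : ι) : Equiv.Perm (PhT ι) :=
  Equiv.prodCongr (Equiv.swap (some i) none) (Equiv.refl _)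

/-- the flip positions -/
def selS (f : PhT ι) : Bool := f.1.isNone && decide (f.2 ≠ 0)

theorem selS_iff (f : PhT ι) : selS f = true ↔ f = (none, 1) ∨ f = (none, 2) := by
  obtain ⟨i, j⟩ := f
  cases i <;> fin_cases j <;> simp [selS]

theorem lab_r3 {M : Type} [Group M] (x : ι → M) (hx : ∀ i, x i * x i = 1) :
    hlab x * (fun f => hlab x (alP⁻¹ f)) * (fun f => hlab x (beP⁻¹ f)) = 1 := by
  funext ⟨i, j⟩
  have h1 : (alP : Equiv.Perm (PhT ι))⁻¹ = alP := by
    apply inv_eq_of_mul_eq_one_left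
    ext1 ⟨i, j⟩; simp [alP]
  have h2 : (beP : Equiv.Perm (PhT ι))⁻¹ = beP := by
    apply inv_eq_of_mul_eq_one_left
    ext1 ⟨i, j⟩; simp [beP]
  rw [h1, h2]
  simp only [Pi.mul_apply, Pi.one_apply]
  cases i with
  | none => simp [hlab, alP, beP]
  | some i =>
    simp only [alP, beP, Equiv.prodCongr_apply, Prod.map_apply, Equiv.refl_apply, hlab]
    fin_cases j
    · rw [Equiv.swap_apply_of_ne_of_ne (by decide) (by decide), if_neg (by decide), if_pos (by simp), hx]
      simp
    · simp [hx]; simp [Equiv.swap_apply_def, hx]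
    · simp [hx]

theorem lab_W {M : Type} [Group M] (x : ι → M) (hx : ∀ i, x i * x i = 1) (i : ι) :
    (fun f => (hlab x * fun f => hlab x ((piP i)⁻¹ f)) ((muP i)⁻¹ f)) =
      fun f => if selS f = true then x i else 1 := by
  classical
  have h1 : (piP i : Equiv.Perm (PhT ι))⁻¹ = piP i := by
    apply inv_eq_of_mul_eq_one_left
    ext1 ⟨i, j⟩; simp [piP]
  have h2 : (muP i : Equiv.Perm (PhT ι))⁻¹ = muP i := by
    apply inv_eq_of_mul_eq_one_left
    ext1 ⟨i, j⟩; simp [muP]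
  rw [h1, h2]
  have key : ∀ f : PhT ι, hlab x f * hlab x (piP i f) = if f.1 = some i ∧ f.2 ≠ 0 then x i else 1 := by
    rintro ⟨i', j⟩
    simp only [piP]
    cases i' with
    | none =>
      rw [Equiv.swap_apply_of_ne_of_ne (by simp) (by simp)]
      simp [hlab]
    | some i' =>
      by_cases h : i' = i
      · subst h
        fin_cases j
        · rw [Equiv.swap_apply_of_ne_of_ne (by simp) (by simp)]
          simp [hlab, hx]
        · simp [hlab]
        · simp [hlab]
      · rw [Equiv.swap_apply_of_ne_of_ne (by simp [h]) (by simp [h])]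
        by_cases hj : j = 2 <;> simp [hlab, h, hx, hj]
  funext ⟨i', j⟩
  simp only [Pi.mul_apply]
  rw [key]
  cases i' with
  | none => simp [muP, selS]
  | some i' =>
    by_cases h : i' = i
    · subst h; simp [muP, selS]
    · simp [muP, selS, Equiv.swap_apply_def, h]
end labels
end UD

namespace UD

theorem partC (ι κ : Type) [Finite ι] [Finite κ] (rel : κ → FreeGroup ι) (y t k : FreeGroup ι) :
    ∃ (c : Set (FreeGroup (Fin 2))) (Y T K C : FreeGroup (Fin 2)), c.Finite ∧
      (∀ i, ∃ kk : ℕ, 0 < kk ∧ FreeGroup.of i ^ kk ∈ c) ∧ ∀ N : ℕ,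
      ((∀ (G : Type) [Group G] (v : ι → G), (∀ j, FreeGroup.lift v (rel j) = 1) →
          commVal (FreeGroup.lift v y) (FreeGroup.lift v t) (FreeGroup.lift v k) N = 1) →
        Subgroup.normalClosure (insert (commVal Y T K N * C) c) = ⊤) ∧
      ((∃ (G : Type) (_ : Group G) (v : ι → G), (∀ i, v i * v i = 1) ∧
          (∀ j, FreeGroup.lift v (rel j) = 1) ∧
          commVal (FreeGroup.lift v y) (FreeGroup.lift v t) (FreeGroup.lift v k) N ≠ 1 ∧
          commVal (FreeGroup.lift v y) (FreeGroup.lift v t) (FreeGroup.lift v k) N *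
          commVal (FreeGroup.lift v y) (FreeGroup.lift v t) (FreeGroup.lift v k) N = 1) →
        Subgroup.normalClosure (insert (commVal Y T K N * C) c) ≠ ⊤) := by
  classical
  haveI := Fintype.ofFinite ι
  obtain ⟨P, hP1, hP⟩ := Nat.exists_infinite_primes (Fintype.card (Bool × PhT ι) + 5)
  obtain ⟨s, hs⟩ : ∃ s, P = Fintype.card (Bool × PhT ι) + (s + 3) := ⟨P - Fintype.card (Bool × PhT ι) - 3, by omega⟩
  have hcard : Fintype.card (PsT ι s) = P := by
    rw [Fintype.card_sum, hs, Fintype.card_fin]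
  let e0 : Fin (s + 3) := ⟨0, by omega⟩
  let e1 : Fin (s + 3) := ⟨1, by omega⟩
  let e2 : Fin (s + 3) := ⟨2, by omega⟩
  let qE : Equiv.Perm (Fin (s + 3)) := Equiv.swap e0 e1 * Equiv.swap e0 e2
  let q : Equiv.Perm (PsT ι s) := Equiv.Perm.sumCongr 1 qE
  have hq : q.IsThreeCycle := by
    have : q = Equiv.swap (Sum.inr e0) (Sum.inr e1) * Equiv.swap (Sum.inr e0) (Sum.inr e2) := by
      simp only [q, qE]
      rw [← Equiv.Perm.sumCongr_one_swap, ← Equiv.Perm.sumCongr_one_swap, Equiv.Perm.sumCongr_mul, one_mul]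
    rw [this]
    exact Equiv.Perm.isThreeCycle_swap_mul_swap_same (by simp [e0, e1]) (by simp [e0, e2]) (by simp [e1, e2])
  obtain ⟨p, hpa, hpP, hgen⟩ := gen_alt (PsT ι s) (by rw [hcard]; exact hP) (by rw [hcard]; omega) q hq
  rw [hcard] at hpP
  have hqa : q ∈ alternatingGroup (PsT ι s) := hq.mem_alternatingGroup
  have hq3 : q ^ 3 = 1 := by rw [← hq.orderOf, pow_orderOf_eq_one]
  let A := alternatingGroup (PsT ι s)
  haveI : IsSimpleGroup A := alternatingGroup.isSimpleGroup (by
    rw [Nat.card_eq_fintype_card, hcard]; omega)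
  have hword : ∀ g : A, ∃ u : FreeGroup (Fin 2), FreeGroup.lift ![p, q] u = (g : Equiv.Perm (PsT ι s)) := by
    intro g
    have hg : (g : Equiv.Perm (PsT ι s)) ∈ Subgroup.closure {p, q} := by rw [hgen]; exact g.2
    have hr : (FreeGroup.lift ![p, q]).range = Subgroup.closure {p, q} := by
      rw [FreeGroup.range_lift_eq_closure]
      congr 1
      ext x
      simp [eq_comm, or_comm]
    rw [← hr] at hg
    exact hg
  choose u hu using hword
  let a : FreeGroup (Fin 2) := FreeGroup.of 0
  let b : FreeGroup (Fin 2) := FreeGroup.of 1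
  let U : A → FreeGroup (Fin 2) := fun g => FreeGroup.lift ![a, b ^ 4] (u g)
  let H : FreeGroup (Fin 2) := b ^ 3
  -- the permutations used
  let bl : Equiv.Perm (PhT ι) → A := fun s => ⟨blkP s, sign_blk s⟩
  have hSa : (flipP selS : Equiv.Perm (PsT ι s)) ∈ A := by
    exact sign_flip selS (none, 1) (none, 2) (by simp) selS_iff
  let om : A := ⟨flipP selS, hSa⟩
  have hom : (om : Equiv.Perm (PsT ι s)) ≠ 1 := by
    intro h
    have := congrArg (fun e => e (Sum.inl (false, ((none, 1) : PhT ι)))) h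
    simp [om, flipP, selS] at this
  let W : ι → FreeGroup (Fin 2) := fun i =>
    U (bl (muP i)) * (H * (U (bl (piP i)) * H * (U (bl (piP i)))⁻¹)) * (U (bl (muP i)))⁻¹
  let r3 : FreeGroup (Fin 2) := H * (U (bl alP) * H * (U (bl alP))⁻¹) * (U (bl beP) * H * (U (bl beP))⁻¹)
  let c : Set (FreeGroup (Fin 2)) :=
    {a ^ P, b ^ 6, U ⟨p, hpa⟩ * a⁻¹, U ⟨q, hqa⟩ * (b ^ 4)⁻¹, r3} ∪
      Set.range (fun x : A × A => U x.1 * U x.2 * (U (x.1 * x.2))⁻¹) ∪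
      Set.range (fun j => FreeGroup.lift W (rel j))
  refine ⟨c, FreeGroup.lift W y, FreeGroup.lift W t, FreeGroup.lift W k, (U om)⁻¹, ?_, ?_, ?_⟩
  · refine Set.Finite.union (Set.Finite.union ?_ (Set.finite_range _)) (Set.finite_range _)
    exact Set.toFinite _
  · intro i
    fin_cases i
    · exact ⟨P, hP.pos, Or.inl (Or.inl (by simp [a]))⟩
    · exact ⟨6, by norm_num, Or.inl (Or.inl (by simp [b]))⟩
  intro N
  have hcomm : ∀ {M : Type} [Group M] (V : FreeGroup (Fin 2) →* M) (z : FreeGroup ι),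
      V (FreeGroup.lift W z) = FreeGroup.lift (fun i => V (W i)) z := by
    intro M _ V z
    have : V.comp (FreeGroup.lift W) = FreeGroup.lift (fun i => V (W i)) := by
      ext i; simp
    rw [← this]; rfl
  constructor
  · intro hall
    set Nn := Subgroup.normalClosure (insert (commVal (FreeGroup.lift W y) (FreeGroup.lift W t)
      (FreeGroup.lift W k) N * (U om)⁻¹) c) with hNn
    let Q := FreeGroup (Fin 2) ⧸ Nn
    let mk : FreeGroup (Fin 2) →* Q := QuotientGroup.mk' Nn
    have hker : ∀ z ∈ c, mk z = 1 := fun z hz =>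
      (QuotientGroup.eq_one_iff z).2 (Subgroup.subset_normalClosure (Set.mem_insert_of_mem _ hz))
    have hlast : mk (commVal (FreeGroup.lift W y) (FreeGroup.lift W t)
      (FreeGroup.lift W k) N * (U om)⁻¹) = 1 :=
      (QuotientGroup.eq_one_iff _).2 (Subgroup.subset_normalClosure (Set.mem_insert _ _))
    have h1 := hall Q (fun i => mk (W i)) (fun j => by
      rw [← hcomm mk]; exact hker _ (Or.inr ⟨j, rfl⟩))
    rw [← hcomm mk, ← hcomm mk, ← hcomm mk, ← map_commVal] at h1
    rw [map_mul, h1, one_mul, map_inv, inv_eq_one] at hlast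
    let Uh : A →* Q := MonoidHom.mk' (fun g => mk (U g)) (by
      intro g h
      have := hker _ (Or.inl (Or.inr ⟨(g, h), rfl⟩))
      simp only [map_mul, map_inv] at this
      exact (mul_inv_eq_one.1 this).symm)
    have hUh : Uh.ker = ⊤ := by
      rcases Uh.normal_ker.eq_bot_or_eq_top with h | h
      · exfalso
        have : om ∈ Uh.ker := hlast
        rw [h, Subgroup.mem_bot] at this
        exact hom (by rw [this]; rfl)
      · exact h
    have hU : ∀ g, mk (U g) = 1 := fun g => by
      have : g ∈ Uh.ker := by rw [hUh]; trivial
      exact this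
    have ha : mk a = 1 := by
      have := hker (U ⟨p, hpa⟩ * a⁻¹) (Or.inl (Or.inl (by simp)))
      rwa [map_mul, hU, one_mul, map_inv, inv_eq_one] at this
    have hb4 : mk b ^ 4 = 1 := by
      have := hker (U ⟨q, hqa⟩ * (b ^ 4)⁻¹) (Or.inl (Or.inl (by simp)))
      rwa [map_mul, hU, one_mul, map_inv, inv_eq_one, map_pow] at this
    have hb9 : mk b ^ 9 = 1 := by
      have := hker r3 (Or.inl (Or.inl (by simp)))
      simp only [r3, map_mul, map_inv, hU, one_mul, inv_one, mul_one, H, map_pow] at this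
      rw [← this]; group
    have hb : mk b = 1 := by
      calc mk b = mk b ^ 9 * (mk b ^ 4)⁻¹ * (mk b ^ 4)⁻¹ := by group
        _ = 1 := by rw [hb9, hb4]; simp
    have hmk : mk = 1 := by
      ext i
      fin_cases i
      · exact ha
      · exact hb
    rw [eq_top_iff]
    intro z _
    have : mk z = 1 := by rw [hmk]; rfl
    exact (QuotientGroup.eq_one_iff z).1 this
  · rintro ⟨G, _, v, hv, hrel, hne, hsq⟩ htop
    obtain ⟨Y, _, rho, hrho⟩ := exists_rep G _ hne hsq
    have hrr : ∀ i, rho (v i) * rho (v i) = 1 := fun i => by rw [← map_mul, hv, map_one]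
    let h : PhT ι → Equiv.Perm (Y × Bool) := hlab (fun i => rho (v i))
    have hh2 : h * h = 1 := by
      funext ⟨i, j⟩
      cases i with
      | none => simp [h, hlab]
      | some i => 
        by_cases hj : j = 2
        · simp [h, hlab, hj]
        · simp [h, hlab, hj, hrr]
    let act : Equiv.Perm (PsT ι s) →* Equiv.Perm (Y × (PsT ι s)) := actP
    let lab : (PhT ι → Equiv.Perm (Y × Bool)) →* Equiv.Perm (Y × (PsT ι s)) := labP
    let V : FreeGroup (Fin 2) →* Equiv.Perm (Y × (PsT ι s)) := FreeGroup.lift ![act p, act q * lab h]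
    have hVa : V a = act p := by simp [V, a]
    have hVb : V b = act q * lab h := by simp [V, b]
    have hcq : Commute (act q) (lab h) := act_three_comm_lab qE h
    have hl2 : lab h ^ 2 = 1 := by rw [← map_pow, pow_two, hh2, map_one]
    have hq3' : act q ^ 3 = 1 := by rw [← map_pow, hq3, map_one]
    have hVH : V H = lab h := by
      simp only [H]
      rw [map_pow, hVb, hcq.mul_pow, hq3', one_mul, pow_succ, hl2, one_mul]
    have hVb4 : V (b ^ 4) = act q := by
      rw [map_pow, hVb, hcq.mul_pow, pow_succ (act q), hq3', one_mul, 
        show (4 : ℕ) = 2 * 2 from rfl, pow_mul, hl2, one_pow, mul_one]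
    have hVU : ∀ g : A, V (U g) = act g := by
      intro g
      rw [← hu g]
      have : V.comp (FreeGroup.lift ![a, b ^ 4]) = act.comp (FreeGroup.lift ![p, q]) := by
        refine FreeGroup.ext_hom _ _ (fun i => ?_)
        fin_cases i
        · simpa using hVa
        · simpa using hVb4
      exact DFunLike.congr_fun this (u g)
    have hconj : ∀ (s : Equiv.Perm (PhT ι)) (F : PhT ι → Equiv.Perm (Y × Bool)), 
        act (bl s : A) * lab F * (act (bl s : A))⁻¹ = lab (fun f => F (s⁻¹ f)) :=
      fun s F => blk_lab s F
    let D : G →* Equiv.Perm (Y × (PsT ι s)) := MonoidHom.mk' 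
      (fun g => lab (fun f => if selS f then rho g else 1)) (by
        intro g g'
        rw [← map_mul]
        congr 1
        funext f
        by_cases hf : selS f <;> simp [hf])
    have hDom : D (commVal (FreeGroup.lift v y) (FreeGroup.lift v t) (FreeGroup.lift v k) N) = act om := by
      exact (act_flip selS _ hrho).symm
    have hVW : ∀ i, V (W i) = D (v i) := by
      intro i
      simp only [W, map_mul, map_inv, hVU, hVH, hconj]
      rw [← map_mul, hconj]
      simp only [D, MonoidHom.mk'_apply]
      exact congrArg lab (lab_W (fun i => rho (v i)) hrr i)
    have hVr : ∀ z, V (FreeGroup.lift W z) = D (FreeGroup.lift v z) := by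
      intro z
      rw [hcomm V]
      have : D.comp (FreeGroup.lift v) = FreeGroup.lift (fun i => V (W i)) := by
        refine FreeGroup.ext_hom _ _ (fun i => ?_)
        simp [hVW]
      rw [← this]; rfl
    have hker : ∀ z ∈ insert (commVal (FreeGroup.lift W y) (FreeGroup.lift W t)
      (FreeGroup.lift W k) N * (U om)⁻¹) c, V z = 1 := by
      rintro z (rfl | ((hz | ⟨⟨g, g'⟩, rfl⟩) | ⟨j, rfl⟩))
      · rw [map_mul, map_inv, map_commVal, hVr, hVr, hVr, ← map_commVal, hDom, hVU, mul_inv_cancel]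
      · rcases hz with rfl | rfl | rfl | rfl | rfl
        · rw [map_pow, hVa, ← map_pow, hpP, map_one]
        · rw [map_pow, hVb, hcq.mul_pow, show (6 : ℕ) = 3 * 2 from rfl, pow_mul, hq3', one_pow, one_mul, mul_comm 3 2, pow_mul,
            hl2, one_pow]
        · rw [map_mul, map_inv, hVU, hVa, mul_inv_cancel]
        · rw [map_mul, map_inv, hVU, hVb4, mul_inv_cancel]
        · simp only [r3, map_mul, map_inv, hVU, hVH, hconj]
          rw [← map_mul, ← map_mul, ← map_one lab]
          exact congrArg lab (lab_r3 (fun i => rho (v i)) hrr)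
      · simp only [map_mul, map_inv, hVU]
        rw [← map_mul, ← Subgroup.coe_mul, mul_inv_cancel]
      · change V (FreeGroup.lift W (rel j)) = 1
        rw [hVr, hrel, map_one]
    have hle : Subgroup.normalClosure (insert (commVal (FreeGroup.lift W y) (FreeGroup.lift W t)
      (FreeGroup.lift W k) N * (U om)⁻¹) c) ≤ V.ker := Subgroup.normalClosure_le_normal hker
    rw [htop] at hle
    have : V (U om) = 1 := hle trivial
    rw [hVU] at this
    exact hom (actP_inj _ this)

end UD

namespace UD

theorem finite_gen (I J : Type) [Finite I] [Finite J] : Finite (Gen I J) := by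
  let f : Gen I J → Fin 6 ⊕ I ⊕ J := fun g =>
    match g with
    | .xi1 => .inl 0
    | .xi2 => .inl 1
    | .eta1 => .inl 2
    | .eta2 => .inl 3
    | .s => .inl 4
    | .k => .inl 5
    | .t i => .inr (.inl i)
    | .r j => .inr (.inr j)
  refine Finite.of_injective f ?_
  intro a b h
  cases a <;> cases b <;> simp_all [f]

theorem finite_relIx (J : Type) [Finite J] : Finite (RelIx J) := by
  let f : RelIx J → Fin 2 ⊕ (Fin 4 × J) := fun g =>
    match g with
    | .xy => .inl 0
    | .kt => .inl 1
    | .rx j => .inr (0, j)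
    | .ry j => .inr (1, j)
    | .rt j => .inr (2, j)
    | .kr j => .inr (3, j)
  refine Finite.of_injective f ?_
  intro a b h
  cases a <;> cases b <;> simp_all [f]

theorem partBC (I J : Type) [Finite I] [Finite J] (rules : J → Rule I) (i0 istar : I) :
    ∃ (c : Set (FreeGroup (Fin 2))) (Y T K C : FreeGroup (Fin 2)), c.Finite ∧
      (∀ i, ∃ kk : ℕ, 0 < kk ∧ FreeGroup.of i ^ kk ∈ c) ∧ ∀ N : ℕ,
      (Subgroup.normalClosure (insert (commVal Y T K N * C) c) = ⊤ ↔
        Relation.EqvGen (RStep rules) (i0, 0, (N : ℤ)) (istar, 0, 0)) := by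
  haveI := finite_gen I J
  haveI := finite_relIx J
  obtain ⟨c, Y, T, K, C, hc, hk, h⟩ := partC (Gen I J) (RelIx J)
    (fun x => relVal FreeGroup.of rules istar x) (gY FreeGroup.of) (FreeGroup.of (.t i0)) (FreeGroup.of .k)
  refine ⟨c, Y, T, K, C, hc, hk, fun N => ?_⟩
  obtain ⟨h1, h2⟩ := h N
  have hY : ∀ (G : Type) [Group G] (v : Gen I J → G), FreeGroup.lift v (gY FreeGroup.of) = gY v := by
    intro G _ v; simp [gY]
  have hr : ∀ (G : Type) [Group G] (v : Gen I J → G) (x), FreeGroup.lift v (relVal FreeGroup.of rules istar x)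
      = relVal v rules istar x := by
    intro G _ v x; rw [map_relVal]; simp
  constructor
  · intro ht
    by_contra hN
    obtain ⟨G, _, v, hv, hrel, hne, hsq⟩ := exists_model rules istar i0 N hN
    refine h2 ⟨G, inferInstance, v, hv, ?_, ?_, ?_⟩ ht
    · intro j; rw [hr]; exact hrel j
    · rw [hY]; simpa using hne
    · rw [hY]; simpa using hsq
  · intro hN
    apply h1
    intro G _ v hrel
    have := commVal_eq_one v rules istar i0 (fun x => by rw [← hr]; exact hrel x) N hN
    rw [hY]; simpa using this

end UD

namespace UD

theorem fg_comm_head {ι : Type*} (z : FreeGroup ι) (i k : ι) (b : Bool) [DecidableEq ι]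
    (L : List (ι × Bool)) (hL : z.toWord = (k, b) :: L) (hk : k ≠ i)
    (h : z * FreeGroup.of i = FreeGroup.of i * z) : False := by
  have h1 : (FreeGroup.of i * z).toWord = (i, true) :: (k, b) :: L := by
    rw [FreeGroup.toWord_mul, FreeGroup.toWord_of, List.singleton_append, FreeGroup.reduce.cons,
      FreeGroup.reduce_toWord, hL]
    simp [Ne.symm hk]
  have h2 : ((i, true) :: (k, b) :: L).Sublist (((k, b) :: L) ++ [(i, true)]) := by
    have := FreeGroup.toWord_mul_sublist z (FreeGroup.of i)
    rwa [h, h1, hL, FreeGroup.toWord_of] at this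
  have h3 := h2.eq_of_length (by simp)
  simp only [List.cons_append, List.cons.injEq, Prod.mk.injEq] at h3
  exact hk h3.1.1.symm

theorem fg_comm_two {ι : Type*} (z : FreeGroup ι) (i j : ι) (hij : i ≠ j)
    (hi : z * FreeGroup.of i = FreeGroup.of i * z)
    (hj : z * FreeGroup.of j = FreeGroup.of j * z) : z = 1 := by
  classical
  rcases hL : z.toWord with _ | ⟨⟨k, b⟩, L⟩
  · exact FreeGroup.toWord_eq_nil_iff.1 hL
  · exfalso
    by_cases hk : k = i
    · exact fg_comm_head z j k b L hL (by rintro rfl; exact hij hk.symm) hj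
    · exact fg_comm_head z i k b L hL hk hi

/-- A free group with nontrivial center is cyclic. -/
theorem free_center {H : Type*} [Group H] [IsFreeGroup H] (z : H) (hz : z ≠ 1)
    (hc : ∀ h, z * h = h * z) : ∃ c : H, ∀ h, h ∈ Subgroup.zpowers c := by
  let e := IsFreeGroup.toFreeGroup H
  have hsub : ∀ i j : IsFreeGroup.Generators H, i = j := by
    intro i j
    by_contra hij
    have key : ∀ k, e z * FreeGroup.of k = FreeGroup.of k * e z := by
      intro k
      have := congrArg e (hc (e.symm (FreeGroup.of k)))
      simpa using this
    have := fg_comm_two (e z) i j hij (key i) (key j)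
    exact hz (e.injective (by simpa using this))
  by_cases hne : Nonempty (IsFreeGroup.Generators H)
  · obtain ⟨i⟩ := hne
    refine ⟨e.symm (FreeGroup.of i), fun h => ?_⟩
    have : ∀ w : FreeGroup (IsFreeGroup.Generators H), w ∈ Subgroup.zpowers (FreeGroup.of i) := by
      intro w
      induction w using FreeGroup.induction_on with
      | C1 => exact one_mem _
      | of x => rw [hsub x i]; exact Subgroup.mem_zpowers _
      | inv_of x hx => exact inv_mem hx
      | mul x y hx hy => exact mul_mem hx hy
    obtain ⟨n, hn⟩ := Subgroup.mem_zpowers_iff.1 (this (e h))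
    refine Subgroup.mem_zpowers_iff.2 ⟨n, ?_⟩
    rw [← map_zpow, hn]; simp
  · refine ⟨1, fun h => ?_⟩
    exfalso
    have : IsEmpty (IsFreeGroup.Generators H) := not_nonempty_iff.1 hne
    exact hz (e.injective (Subsingleton.elim _ _))

/-- Centralizers in free groups are cyclic. -/
theorem free_cyc {F : Type} [Group F] [IsFreeGroup F] (g : F) (hg : g ≠ 1) :
    ∃ c : F, Commute g c ∧ ∀ h, Commute g h → h ∈ Subgroup.zpowers c := by
  let S : Subgroup F := Subgroup.centralizer {g}
  have hS : ∀ h, h ∈ S ↔ Commute g h := by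
    intro h
    rw [Subgroup.mem_centralizer_iff]
    simp [Commute, SemiconjBy]
  haveI : IsFreeGroup S := subgroupIsFreeOfIsFree S
  obtain ⟨c, hc⟩ := free_center (H := S) ⟨g, (hS g).2 (Commute.refl g)⟩
    (fun h => hg (congrArg Subtype.val h))
    (fun h => Subtype.ext ((hS h).1 h.2))
  refine ⟨c, (hS _).1 c.2, fun h hh => ?_⟩
  obtain ⟨n, hn⟩ := Subgroup.mem_zpowers_iff.1 (hc ⟨h, (hS h).2 hh⟩)
  exact Subgroup.mem_zpowers_iff.2 ⟨n, by simpa using congrArg Subtype.val hn⟩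

theorem free_ct {F : Type} [Group F] [IsFreeGroup F] {a b c : F} (hb : b ≠ 1)
    (hab : Commute b a) (hbc : Commute b c) : Commute a c := by
  obtain ⟨d, -, hd⟩ := free_cyc b hb
  obtain ⟨n, rfl⟩ := Subgroup.mem_zpowers_iff.1 (hd a hab)
  obtain ⟨k, rfl⟩ := Subgroup.mem_zpowers_iff.1 (hd c hbc)
  exact (Commute.refl d).zpow_zpow n k

theorem free_conj {F : Type} [Group F] [IsFreeGroup F] [IsMulTorsionFree F] {g x : F} (hg : g ≠ 1)
    (h : Commute g (x * g * x⁻¹)) : Commute g x := by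
  obtain ⟨c, hgc, hc⟩ := free_cyc g hg
  have hg' : x * g * x⁻¹ ≠ 1 := by
    intro h0
    exact hg (by simpa using h0)
  obtain ⟨n, hn⟩ := Subgroup.mem_zpowers_iff.1 (hc g (Commute.refl g))
  have hc1 : c ≠ 1 := by rintro rfl; exact hg (by rw [← hn]; simp)
  -- both x c x⁻¹ and x⁻¹ c x commute with g
  have hA : Commute (x * g * x⁻¹) (x * c * x⁻¹) := by
    have := hgc.map (MulAut.conj x).toMonoidHom
    simpa using this
  have h1 : Commute g (x * c * x⁻¹) := free_ct hg' h.symm hA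
  have hh : Commute g (x⁻¹ * g * x) := by
    have := h.map (MulAut.conj x⁻¹).toMonoidHom
    simp only [MulEquiv.coe_toMonoidHom, MulAut.conj_apply, inv_inv] at this
    have h2 : x⁻¹ * (x * g * x⁻¹) * x = g := by group
    rw [h2] at this
    exact this.symm
  have hg'' : x⁻¹ * g * x ≠ 1 := by
    intro h0
    exact hg (by
      have : x * (x⁻¹ * g * x) * x⁻¹ = g := by group
      rw [← this, h0]; simp)
  have hB : Commute (x⁻¹ * g * x) (x⁻¹ * c * x) := by
    have := hgc.map (MulAut.conj x⁻¹).toMonoidHom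
    simpa using this
  have h2 : Commute g (x⁻¹ * c * x) := free_ct hg'' hh.symm hB
  obtain ⟨p, hp⟩ := Subgroup.mem_zpowers_iff.1 (hc _ h1)
  obtain ⟨q, hq⟩ := Subgroup.mem_zpowers_iff.1 (hc _ h2)
  have hpq : c ^ (q * p) = c := by
    have e1 : c = x⁻¹ * (x * c * x⁻¹) * x⁻¹⁻¹ := by group
    rw [← hp, ← conj_zpow, inv_inv, ← hq, ← zpow_mul] at e1
    exact e1.symm
  have hpq1 : q * p = 1 := by
    have : c ^ (q * p - 1) = 1 := by rw [zpow_sub, hpq, zpow_one, mul_inv_cancel]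
    rcases IsMulTorsionFree.zpow_eq_one_iff.1 this with h | h
    · exact absurd h hc1
    · omega
  have hx2 : Commute c (x * x) := by
    have hp1 : p = 1 ∨ p = -1 := by
      rcases Int.eq_one_or_neg_one_of_mul_eq_one' hpq1 with h | h
      · exact Or.inl h.2
      · exact Or.inr h.2
    have e2 : (x * x) * c * (x * x)⁻¹ = c := by
      have : (x * x) * c * (x * x)⁻¹ = x * (x * c * x⁻¹) * x⁻¹ := by group
      rw [this, ← hp, ← conj_zpow, ← hp, ← zpow_mul]
      rcases hp1 with h | h <;> simp [h]
    have : (x * x) * c = c * (x * x) := by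
      rw [mul_inv_eq_iff_eq_mul] at e2; exact e2
    exact this.symm
  by_cases hx : x = 1
  · rw [hx]; exact Commute.one_right g
  have hxx : x * x ≠ 1 := by
    intro h0
    apply hx
    rw [← pow_two] at h0
    exact (pow_eq_one_iff_left (two_ne_zero)).1 h0
  have h3 : Commute c x := free_ct hxx hx2.symm ((Commute.refl x).mul_left (Commute.refl x))
  exact free_ct hc1 hgc.symm h3

end UD

namespace UD

/-- Extension of a family of generators by the identity. -/
def ox {G X : Type} [Group G] (x : X → G) (u : Option X) : G := u.elim 1 x

theorem free_lift_centr {Q : Type} [Group Q] (θ : Q →* FreeGroup (Fin 2))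
    (hcent : ∀ H : Subgroup Q, IsFreeGroup H → ¬ IsCyclic H →
      Subgroup.centralizer (H : Set Q) = ⊥) (a b : Q) (hab : ¬ Commute (θ a) (θ b))
    (z : Q) (hza : Commute z a) (hzb : Commute z b) : z = 1 := by
  let E : Subgroup Q := Subgroup.centralizer {z}
  have hE : ∀ h, h ∈ E ↔ Commute z h := by
    intro h
    rw [Subgroup.mem_centralizer_iff]
    simp [Commute, SemiconjBy]
  let K : Subgroup (FreeGroup (Fin 2)) := E.map θ
  haveI : IsFreeGroup K := subgroupIsFreeOfIsFree K
  have hlift : ∀ k : K, ∃ e ∈ E, θ e = k := fun k => k.2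
  choose σ hσ hσθ using hlift
  let s : K →* Q := IsFreeGroup.lift (fun a => σ (IsFreeGroup.of a))
  have hs : ∀ k, θ (s k) = k := by
    have : θ.comp s = K.subtype := by
      apply IsFreeGroup.ext_hom
      intro a
      simp [s, hσθ]
    intro k
    exact DFunLike.congr_fun this k
  have hsE : ∀ k, s k ∈ E := by
    let s' : K →* E := IsFreeGroup.lift (fun a => ⟨σ (IsFreeGroup.of a), hσ _⟩)
    have : E.subtype.comp s' = s := by
      apply IsFreeGroup.ext_hom
      intro a
      simp [s, s']
    intro k
    rw [← this]
    exact (s' k).2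
  have hinj : Function.Injective s := by
    intro k k' h
    apply Subtype.ext
    rw [← hs, ← hs, h]
  have e : K ≃* s.range := MonoidHom.ofInjective hinj
  haveI hfree : IsFreeGroup s.range := IsFreeGroup.ofMulEquiv e
  have hcyc : ¬ IsCyclic s.range := by
    intro hc
    letI := IsCyclic.commGroup (α := s.range)
    have ha : θ a ∈ K := ⟨a, (hE a).2 hza, rfl⟩
    have hb : θ b ∈ K := ⟨b, (hE b).2 hzb, rfl⟩
    have h1 : e ⟨_, ha⟩ * e ⟨_, hb⟩ = e ⟨_, hb⟩ * e ⟨_, ha⟩ := mul_comm _ _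
    rw [← map_mul, ← map_mul] at h1
    exact hab (congrArg Subtype.val (e.injective h1))
  have h1 := hcent _ hfree hcyc
  have h2 : z ∈ Subgroup.centralizer (s.range : Set Q) := by
    rw [Subgroup.mem_centralizer_iff]
    rintro _ ⟨k, rfl⟩
    exact ((hE _).1 (hsE k)).symm
  rw [h1] at h2
  exact Subgroup.mem_bot.1 h2

theorem coord {Q : Type} [Group Q] {X Jr : Type} {m : ℕ} (x : X → Q)
    (hx : Subgroup.closure (Set.range x) = ⊤) (r : Jr → Q)
    (hcent : ∀ H : Subgroup Q, IsFreeGroup H → ¬ IsCyclic H →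
      Subgroup.centralizer (H : Set Q) = ⊥)
    (hno : ∀ β : Q →* FreeGroup (Fin 2), Function.Surjective β → (∀ j, β (r j) = 1) → False)
    (θ : Q →* FreeGroup (Fin 2)) (hθ : Function.Surjective θ) (α : Q →* Q) (ε : Jr → Fin m → Q)
    (hα : ∀ j, α (r j) = (List.ofFn (ε j)).prod)
    (hcomm : ∀ i i', i ≠ i' → ∀ j j' (u v : Option X),
      Commute (α (ox x u) * ε j i * (α (ox x u))⁻¹) (α (ox x v) * ε j' i' * (α (ox x v))⁻¹))
    (hgen : Subgroup.closure (Set.range α ∪ Set.range (fun p : Jr × Fin m => ε p.1 p.2)) = ⊤) :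
    ∃ i, ∀ i' ≠ i, ∀ j, ε j i' = 1 := by
  by_contra hcon
  push Not at hcon
  have hsame : ∀ i j j' (u v : Option X), Commute (θ (α (ox x u) * ε j i * (α (ox x u))⁻¹))
      (θ (α (ox x v) * ε j' i * (α (ox x v))⁻¹)) := by
    intro i j j' u v
    by_contra hc
    obtain ⟨i', hi', j1, hj1⟩ := hcon i
    apply hj1
    refine free_lift_centr θ hcent _ _ hc (ε j1 i') ?_ ?_
    · have := hcomm i' i hi' j1 j none u
      simpa [ox] using this
    · have := hcomm i' i hi' j1 j' none v
      simpa [ox] using this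
  have hall : ∀ i i' j j' (u v : Option X), Commute (θ (α (ox x u) * ε j i * (α (ox x u))⁻¹))
      (θ (α (ox x v) * ε j' i' * (α (ox x v))⁻¹)) := by
    intro i i' j j' u v
    by_cases h : i = i'
    · subst h; exact hsame i j j' u v
    · exact (hcomm i i' h j j' u v).map θ
  have htriv : ∀ j i, θ (ε j i) = 1 := by
    intro j i
    by_contra hg
    let S : Subgroup Q := (Subgroup.centralizer {θ (ε j i)}).comap θ
    have hS : ∀ h, h ∈ S ↔ Commute (θ (ε j i)) (θ h) := by
      intro h
      simp only [S, Subgroup.mem_comap]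
      rw [Subgroup.mem_centralizer_iff]
      simp [Commute, SemiconjBy]
    have hαS : ∀ q, α q ∈ S := by
      have : Subgroup.closure (Set.range x) ≤ S.comap α := by
        rw [Subgroup.closure_le]
        rintro _ ⟨y, rfl⟩
        rw [SetLike.mem_coe, Subgroup.mem_comap, hS]
        apply free_conj hg
        have := hall i i j j none (some y)
        simpa [ox] using this
      rw [hx] at this
      exact fun q => this (Subgroup.mem_top q)
    have hS1 : S = ⊤ := by
      rw [eq_top_iff, ← hgen, Subgroup.closure_le]
      rintro _ (⟨q, rfl⟩ | ⟨⟨j', i'⟩, rfl⟩)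
      · exact hαS q
      · rw [SetLike.mem_coe, hS]
        have := hall i i' j j' none none
        simpa [ox] using this
    have hcen : ∀ w, Commute (θ (ε j i)) w := by
      intro w
      obtain ⟨q, rfl⟩ := hθ w
      rw [← hS, hS1]; exact Subgroup.mem_top _
    exact hg (fg_comm_two _ 0 1 (by decide) (hcen _) (hcen _))
  refine hno (θ.comp α) ?_ ?_
  · rw [← MonoidHom.range_eq_top, eq_top_iff]
    intro w _
    obtain ⟨q, rfl⟩ := hθ w
    have : Subgroup.closure (Set.range α ∪ Set.range (fun p : Jr × Fin m => ε p.1 p.2)) ≤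
        (θ.comp α).range.comap θ := by
      rw [Subgroup.closure_le]
      rintro _ (⟨q, rfl⟩ | ⟨⟨j', i'⟩, rfl⟩)
      · exact ⟨q, rfl⟩
      · rw [SetLike.mem_coe, Subgroup.mem_comap, htriv]; exact one_mem _
    rw [hgen] at this
    exact this (Subgroup.mem_top q)
  · intro j
    rw [MonoidHom.comp_apply, hα, map_list_prod]
    apply List.prod_eq_one
    intro y hy
    rw [List.mem_map] at hy
    obtain ⟨z, hz, rfl⟩ := hy
    rw [List.mem_ofFn] at hz
    obtain ⟨i, rfl⟩ := hz
    exact htriv j i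

end UD

namespace UD

theorem prod_ofFn_single {Q : Type} [Monoid Q] : ∀ {m : ℕ} (f : Fin m → Q) (l : Fin m)
    (_ : ∀ i, i ≠ l → f i = 1), (List.ofFn f).prod = f l := by
  intro m
  induction m with
  | zero => intro f l; exact l.elim0
  | succ m ih =>
    intro f l
    refine Fin.cases ?_ (fun l => ?_) l
    · intro h
      rw [List.ofFn_succ, List.prod_cons, List.prod_eq_one, mul_one]
      intro y hy
      rw [List.mem_ofFn] at hy
      obtain ⟨i, rfl⟩ := hy
      exact h _ (Fin.succ_ne_zero i)
    · intro h
      rw [List.ofFn_succ, List.prod_cons, h 0 (Fin.succ_ne_zero l).symm, one_mul]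
      exact ih (fun i => f i.succ) l (fun i hi => h _ (fun e => hi (Fin.succ_injective _ e)))

theorem ofFn_prod_apply {Q : Type} [Monoid Q] {m k : ℕ} (f : Fin m → (Fin k → Q)) (l : Fin k) :
    (List.ofFn f).prod l = (List.ofFn (fun i => f i l)).prod := by
  have := map_list_prod (Pi.evalMonoidHom (fun _ : Fin k => Q) l) (List.ofFn f)
  rw [List.map_ofFn] at this
  exact this

theorem onto_iff {Q : Type} [Group Q] {X Jr : Type} {m : ℕ} (hm : 2 ≤ m) (x : X → Q)
    (hx : Subgroup.closure (Set.range x) = ⊤) (r : Jr → Q)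
    (hHopf : ∀ φ : Q →* Q, Function.Surjective φ → Function.Injective φ)
    (hcent : ∀ H : Subgroup Q, IsFreeGroup H → ¬ IsCyclic H →
      Subgroup.centralizer (H : Set Q) = ⊥)
    (hno : ∀ β : Q →* FreeGroup (Fin 2), Function.Surjective β → (∀ j, β (r j) = 1) → False)
    (θ : Q →* FreeGroup (Fin 2)) (hθ : Function.Surjective θ) :
    (∃ (α : Q →* (Fin m → Q)) (ε : Jr → Fin m → (Fin m → Q)),
      (∀ j, α (r j) = (List.ofFn (ε j)).prod) ∧
      (∀ i i', i ≠ i' → ∀ j j' (u v : Option X),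
        Commute (α (ox x u) * ε j i * (α (ox x u))⁻¹)
          (α (ox x v) * ε j' i' * (α (ox x v))⁻¹)) ∧
      Subgroup.closure (Set.range α ∪ Set.range (fun p : Jr × Fin m => ε p.1 p.2)) = ⊤) ↔
    Subgroup.normalClosure (Set.range r) = ⊤ := by
  constructor
  · rintro ⟨α, ε, hα, hcomm, hgen⟩
    let N := Subgroup.normalClosure (Set.range r)
    let ev : ∀ l : Fin m, (Fin m → Q) →* Q := fun l => Pi.evalMonoidHom (fun _ => Q) l
    let a : Fin m → (Q →* Q) := fun l => (ev l).comp α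
    have hev : ∀ l, Function.Surjective (ev l) := fun l q => ⟨fun _ => q, rfl⟩
    have hgenl : ∀ l, Subgroup.closure (Set.range (a l) ∪
        Set.range (fun p : Jr × Fin m => ε p.1 p.2 l)) = ⊤ := by
      intro l
      have h1 := congrArg (Subgroup.map (ev l)) hgen
      rw [MonoidHom.map_closure, Subgroup.map_top_of_surjective _ (hev l), Set.image_union,
        ← Set.range_comp, ← Set.range_comp] at h1
      exact h1
    have hαl : ∀ l j, a l (r j) = (List.ofFn (fun i => ε j i l)).prod := by
      intro l j
      rw [← ofFn_prod_apply, ← hα]; rfl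
    have hc := fun l => coord x hx r hcent hno θ hθ (a l) (fun j i => ε j i l) (hαl l)
      (fun i i' hii j j' u v => (hcomm i i' hii j j' u v).map (ev l)) (hgenl l)
    have hεN : ∀ j i l, ∃ n ∈ N, a l n = ε j i l := by
      intro j i l
      obtain ⟨i0, hi0⟩ := hc l
      by_cases hi : i = i0
      · refine ⟨r j, Subgroup.subset_normalClosure ⟨j, rfl⟩, ?_⟩
        rw [hαl, prod_ofFn_single _ i0 (fun i hi => hi0 i hi j), hi]
      · exact ⟨1, one_mem _, by rw [map_one, hi0 i hi j]⟩
    have hsurj : ∀ l, Function.Surjective (a l) := by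
      intro l
      rw [← MonoidHom.range_eq_top, eq_top_iff, ← hgenl l, Subgroup.closure_le]
      rintro _ (⟨q, rfl⟩ | ⟨⟨j, i⟩, rfl⟩)
      · exact ⟨q, rfl⟩
      · obtain ⟨n, -, hn⟩ := hεN j i l
        exact ⟨n, hn⟩
    have hinj : ∀ l, Function.Injective (a l) := fun l => hHopf _ (hsurj l)
    let Nl : Fin m → Subgroup Q := fun l => N.map (a l)
    have hNl : ∀ l, (Nl l).Normal := fun l =>
      Subgroup.Normal.map Subgroup.normalClosure_normal _ (hsurj l)
    let P : Subgroup (Fin m → Q) := Subgroup.pi Set.univ Nl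
    have hP : P.Normal := by
      constructor
      intro n hn g l hl
      exact (hNl l).conj_mem _ (hn l hl) _
    have htop : α.range ⊔ P = ⊤ := by
      rw [eq_top_iff, ← hgen, Subgroup.closure_le]
      rintro _ (⟨q, rfl⟩ | ⟨⟨j, i⟩, rfl⟩)
      · exact Subgroup.mem_sup_left ⟨q, rfl⟩
      · refine Subgroup.mem_sup_right ?_
        intro l _
        obtain ⟨n, hn, h⟩ := hεN j i l
        exact ⟨n, hn, h⟩
    rw [eq_top_iff]
    intro q _
    let l0 : Fin m := ⟨0, by omega⟩
    let l1 : Fin m := ⟨1, by omega⟩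
    have hl : l1 ≠ l0 := by simp [l0, l1]
    have hg : (Pi.mulSingle l0 (a l0 q) : Fin m → Q) ∈ ((α.range ⊔ P : Subgroup _) : Set _) := by
      rw [htop]; exact Subgroup.mem_top _
    rw [Subgroup.mul_normal] at hg
    obtain ⟨_, ⟨p, rfl⟩, n, hn, hpn⟩ := hg
    have e0 : a l0 p * n l0 = a l0 q := by
      have := congrFun hpn l0
      rw [Pi.mulSingle_eq_same] at this
      exact this
    have e1 : a l1 p * n l1 = 1 := by
      have := congrFun hpn l1
      rw [Pi.mulSingle_eq_of_ne hl] at this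
      exact this
    obtain ⟨n0, hn0, hn0'⟩ := hn l0 (Set.mem_univ _)
    obtain ⟨n1, hn1, hn1'⟩ := hn l1 (Set.mem_univ _)
    rw [← hn0', ← map_mul] at e0
    rw [← hn1', ← map_mul, ← map_one (a l1)] at e1
    have e0' := hinj _ e0
    have e1' := hinj _ e1
    have hp : p ∈ N := by
      rw [eq_inv_of_mul_eq_one_left e1']; exact inv_mem hn1
    show q ∈ N
    rw [← e0']; exact mul_mem hp hn0
  · intro hN
    refine ⟨Pi.monoidHom (fun _ => MonoidHom.id Q), fun j i => Pi.mulSingle i (r j), ?_, ?_, ?_⟩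
    · intro j
      funext l
      rw [ofFn_prod_apply, prod_ofFn_single _ l]
      · simp only [Pi.mulSingle_eq_same]; rfl
      · intro i hi
        exact Pi.mulSingle_eq_of_ne (Ne.symm hi) _
    · intro i i' hii j j' u v
      show _ * _ = _ * _
      funext l
      by_cases h : l = i
      · have h' : l ≠ i' := by rintro rfl; exact hii h.symm
        simp [Pi.mulSingle_eq_of_ne h']
      · simp [Pi.mulSingle_eq_of_ne h]
    · set E := Subgroup.closure (Set.range (Pi.monoidHom (fun _ : Fin m => MonoidHom.id Q)) ∪
        Set.range (fun p : Jr × Fin m => (Pi.mulSingle p.2 (r p.1) : Fin m → Q))) with hE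
      have key : ∀ i q, (Pi.mulSingle i q : Fin m → Q) ∈ E := by
        intro i
        let S : Subgroup Q := E.comap (MonoidHom.mulSingle (fun _ : Fin m => Q) i)
        have hS : S.Normal := by
          constructor
          intro n hn g
          show (Pi.mulSingle i (g * n * g⁻¹) : Fin m → Q) ∈ E
          have hd : (fun _ => g : Fin m → Q) ∈ E := Subgroup.subset_closure (Or.inl ⟨g, rfl⟩)
          have h2 : (Pi.mulSingle i (g * n * g⁻¹) : Fin m → Q) =
              (fun _ => g) * Pi.mulSingle i n * (fun _ => g)⁻¹ := by
            funext l
            by_cases h : l = i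
            · subst h; simp
            · simp [Pi.mulSingle_eq_of_ne h]
          rw [h2]
          exact mul_mem (mul_mem hd hn) (inv_mem hd)
        have : Subgroup.normalClosure (Set.range r) ≤ S := by
          apply Subgroup.normalClosure_le_normal
          rintro _ ⟨j, rfl⟩
          exact Subgroup.subset_closure (Or.inr ⟨(j, i), rfl⟩)
        rw [hN] at this
        exact fun q => this (Subgroup.mem_top q)
      rw [eq_top_iff]
      intro g _
      exact Subgroup.pi_mem_of_mulSingle_mem g (fun i => key i _)

end UD

namespace UD

/-- Powers of words. -/
def wpow {α : Type} (w : List α) (n : ℕ) : List α := Nat.rec [] (fun _ acc => w ++ acc) n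

theorem mk_wpow {Z : Type} (w : List (Z × Bool)) (n : ℕ) :
    FreeGroup.mk (wpow w n) = FreeGroup.mk w ^ n := by
  induction n with
  | zero => rfl
  | succ n ih =>
    show FreeGroup.mk (w ++ wpow w n) = _
    rw [← FreeGroup.mul_mk, ih, pow_succ']

theorem primrec_wpow {α : Type} [Primcodable α] (w : List α) : Primrec (wpow w) :=
  Primrec.nat_rec₁ [] (Primrec.list_append.comp (Primrec.const w) Primrec.snd)

theorem comp_app {α : Type} {f g : ℕ → List α} [Primcodable α] (hf : Computable f) (hg : Computable g) :
    Computable (fun n => f n ++ g n) :=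
  Primrec.list_append.to_comp.comp hf hg

theorem encode (Z0 Rl : Type) [Finite Z0] [Finite Rl] (W : Rl → FreeGroup Z0)
    (Y T K C : FreeGroup Z0) (e : ℕ → ℕ) (he : Computable e) :
    ∃ (N c : ℕ) (f : ℕ → List (List (Fin N × Bool))), Computable f ∧
      (∀ n, (wordsSet (f n)).ncard = c) ∧
      ∀ (n : ℕ) (G : Type) [Group G],
        (∃ φ : PresentedGroup (wordsSet (f n)) →* G, Function.Surjective φ) ↔
        ∃ ψ : FreeGroup Z0 →* G, Function.Surjective ψ ∧ (∀ ρ, ψ (W ρ) = 1) ∧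
          ψ (commVal Y T K (e n) * C) = 1 := by
  classical
  let N := Nat.card (Z0 ⊕ Option Rl)
  let E : Z0 ⊕ Option Rl ≃ Fin N := Finite.equivFin _
  let ι : FreeGroup Z0 →* FreeGroup (Fin N) := FreeGroup.map (fun z => E (Sum.inl z))
  let z : Option Rl → FreeGroup (Fin N) := fun ρ => FreeGroup.of (E (Sum.inr ρ))
  let g : ℕ → Option Rl → FreeGroup (Fin N) := fun n ρ =>
    ρ.elim (ι (commVal Y T K (e n) * C)) (fun ρ => ι (W ρ))
  let h : ℕ → Option Rl × Bool → FreeGroup (Fin N) := fun n p =>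
    if p.2 then z p.1 else g n p.1 * z p.1 ^ 2
  haveI := Fintype.ofFinite Rl
  let CL : List (List (Fin N × Bool)) :=
    (Finset.univ : Finset (Option Rl)).toList.map (fun ρ => (z ρ).toWord) ++
    (Finset.univ : Finset Rl).toList.map (fun ρ => (ι (W ρ) * z (some ρ) ^ 2).toWord)
  let wd : FreeGroup (Fin N) → List (Fin N × Bool) := FreeGroup.toWord
  let A : ℕ → List (Fin N × Bool) := fun n =>
    wpow (wd (ι Y)⁻¹) (e n) ++ wd (ι T) ++ wpow (wd (ι Y)) (e n) ++ wd (ι K) ++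
    wpow (wd (ι Y)⁻¹) (e n) ++ wd (ι T)⁻¹ ++ wpow (wd (ι Y)) (e n) ++ wd (ι K)⁻¹ ++
    wd (ι C * z none ^ 2)
  let f : ℕ → List (List (Fin N × Bool)) := fun n => A n :: CL
  have hA : ∀ n, FreeGroup.mk (A n) = g n none * z none ^ 2 := by
    intro n
    have h1 : g n none = commVal (ι Y) (ι T) (ι K) (e n) * ι C := by
      show ι (commVal Y T K (e n) * C) = _
      rw [map_mul, map_commVal]
    rw [h1]
    simp only [A, wd, ← FreeGroup.mul_mk, mk_wpow, FreeGroup.mk_toWord, commVal]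
    simp only [inv_pow, mul_inv_rev, inv_inv, mul_assoc]
  have hS : ∀ n, wordsSet (f n) = Set.range (h n) := by
    intro n
    ext w
    constructor
    · rintro ⟨l, hl, rfl⟩
      rcases List.mem_cons.1 hl with rfl | hl
      · exact ⟨(none, false), by rw [hA]; simp [h]⟩
      · rcases List.mem_append.1 hl with hl | hl
        · obtain ⟨ρ, -, rfl⟩ := List.mem_map.1 hl
          exact ⟨(ρ, true), by simp [h, FreeGroup.mk_toWord]⟩
        · obtain ⟨ρ, -, rfl⟩ := List.mem_map.1 hl
          exact ⟨(some ρ, false), by simp [h, g, FreeGroup.mk_toWord]⟩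
    · rintro ⟨⟨ρ, b⟩, rfl⟩
      cases b
      · cases ρ with
        | none => exact ⟨A n, List.mem_cons_self, by rw [hA]; simp [h]⟩
        | some ρ =>
          refine ⟨(ι (W ρ) * z (some ρ) ^ 2).toWord, List.mem_cons_of_mem _
            (List.mem_append_right _ (List.mem_map.2 ⟨ρ, by simp, rfl⟩)), ?_⟩
          simp [h, g, FreeGroup.mk_toWord]
      · refine ⟨(z ρ).toWord, List.mem_cons_of_mem _
            (List.mem_append_left _ (List.mem_map.2 ⟨ρ, by simp, rfl⟩)), ?_⟩
        simp [h, FreeGroup.mk_toWord]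
  let χ : FreeGroup (Fin N) →* Multiplicative (Option Rl →₀ ℤ) :=
    FreeGroup.lift (fun i => Sum.elim (fun _ => 1)
      (fun ρ => Multiplicative.ofAdd (Finsupp.single ρ 1)) (E.symm i))
  have hχz : ∀ ρ, χ (z ρ) = Multiplicative.ofAdd (Finsupp.single ρ 1) := by
    intro ρ; simp [χ, z]
  have hχι : ∀ w, χ (ι w) = 1 := by
    have : χ.comp ι = 1 := by
      apply FreeGroup.ext_hom
      intro a
      simp [χ, ι]
    exact fun w => DFunLike.congr_fun this w
  have hχg : ∀ n ρ, χ (g n ρ) = 1 := by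
    intro n ρ
    cases ρ <;> exact hχι _
  have hχh : ∀ n p, χ (h n p) = Multiplicative.ofAdd (Finsupp.single p.1 (if p.2 then 1 else 2)) := by
    rintro n ⟨ρ, b⟩
    cases b
    · simp only [h, Bool.false_eq_true, if_false, map_mul, map_pow, hχg, hχz, one_mul]
      rw [← ofAdd_nsmul, Finsupp.smul_single]; rfl
    · simp only [h, if_true, hχz]
  have hinj : ∀ n, Function.Injective (h n) := by
    intro n p q hpq
    have h1 := congrArg χ hpq
    rw [hχh, hχh] at h1
    have h2 := Multiplicative.ofAdd.injective h1
    rw [Finsupp.single_eq_single_iff] at h2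
    obtain ⟨p1, p2⟩ := p
    obtain ⟨q1, q2⟩ := q
    rcases h2 with ⟨h3, h4⟩ | ⟨h3, h4⟩
    · cases p2 <;> cases q2 <;> simp_all
    · cases p2 <;> simp at h3
  refine ⟨N, Nat.card (Option Rl × Bool), f, ?_, ?_, ?_⟩
  · have p1 : ∀ w : List (Fin N × Bool), Computable (fun n => wpow w (e n)) := fun w =>
      (primrec_wpow w).to_comp.comp he
    have c1 : ∀ w : List (Fin N × Bool), Computable (fun _ : ℕ => w) := fun w => Computable.const w
    have hAc : Computable A := by
      refine comp_app (comp_app (comp_app (comp_app (comp_app (comp_app (comp_app (comp_app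
        (p1 _) (c1 _)) (p1 _)) (c1 _)) (p1 _)) (c1 _)) (p1 _)) (c1 _)) (c1 _)
    exact Computable.list_cons.comp hAc (Computable.const CL)
  · intro n
    rw [hS, ← Nat.card_coe_set_eq, Nat.card_range_of_injective (hinj n)]
  · intro n G _
    constructor
    · rintro ⟨φ, hφ⟩
      let Φ : FreeGroup (Fin N) →* G := φ.comp (PresentedGroup.mk _)
      have hk : ∀ p, Φ (h n p) = 1 := by
        intro p
        have : PresentedGroup.mk (wordsSet (f n)) (h n p) = 1 :=
          PresentedGroup.one_of_mem (by rw [hS]; exact ⟨p, rfl⟩)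
        show φ _ = 1
        rw [this, map_one]
      have hz : ∀ ρ, Φ (z ρ) = 1 := fun ρ => by
        have := hk (ρ, true)
        simpa [h] using this
      have hg : ∀ ρ, Φ (g n ρ) = 1 := fun ρ => by
        have := hk (ρ, false)
        simpa [h, hz] using this
      refine ⟨Φ.comp ι, ?_, fun ρ => hg (some ρ), hg none⟩
      have hΦ : Function.Surjective Φ := hφ.comp (PresentedGroup.mk_surjective _)
      intro y
      obtain ⟨w, rfl⟩ := hΦ y
      show _ ∈ (Φ.comp ι).range
      have : (⊤ : Subgroup (FreeGroup (Fin N))) ≤ (Φ.comp ι).range.comap Φ := by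
        rw [← FreeGroup.closure_range_of, Subgroup.closure_le]
        rintro _ ⟨i, rfl⟩
        obtain ⟨s, rfl⟩ := E.surjective i
        cases s with
        | inl a => exact ⟨FreeGroup.of a, by simp [ι]⟩
        | inr ρ => exact ⟨1, by rw [map_one]; exact (hz ρ).symm⟩
      exact this (Subgroup.mem_top w)
    · rintro ⟨ψ, hψ, hW, hn⟩
      let Φ : FreeGroup (Fin N) →* G := FreeGroup.lift (fun i => Sum.elim (fun a => ψ (FreeGroup.of a))
        (fun _ => 1) (E.symm i))
      have hΦι : ∀ w, Φ (ι w) = ψ w := by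
        have : Φ.comp ι = ψ := by
          apply FreeGroup.ext_hom
          intro a
          simp [Φ, ι]
        exact fun w => DFunLike.congr_fun this w
      have hz : ∀ ρ, Φ (z ρ) = 1 := by intro ρ; simp [Φ, z]
      have hg : ∀ ρ, Φ (g n ρ) = 1 := by
        intro ρ
        cases ρ with
        | none => show Φ (ι _) = 1; rw [hΦι, hn]
        | some ρ => show Φ (ι _) = 1; rw [hΦι, hW]
      have hk : ∀ w ∈ wordsSet (f n), Φ w = 1 := by
        intro w hw
        rw [hS] at hw
        obtain ⟨⟨ρ, b⟩, rfl⟩ := hw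
        cases b <;> simp [h, hz, hg]
      refine ⟨QuotientGroup.lift _ Φ (fun w hw => ?_), ?_⟩
      · exact (Subgroup.normalClosure_le_normal (N := Φ.ker) (fun w hw => hk w hw)) hw
      · intro y
        obtain ⟨w, rfl⟩ := hψ y
        refine ⟨PresentedGroup.mk _ (ι w), ?_⟩
        rw [← hΦι w]; rfl

end UD

namespace UD

theorem nc_iff {X : Type} {R : Set (FreeGroup X)} (θ : PresentedGroup R →* FreeGroup (Fin 2))
    (hθ : Function.Surjective θ) (sub : FreeGroup (Fin 2) →* FreeGroup X)
    (hsub : ∀ w, θ (PresentedGroup.mk R (sub w)) = w) (c : Set (FreeGroup (Fin 2)))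
    (w0 : FreeGroup (Fin 2)) (r : Option (X ⊕ c) → PresentedGroup R)
    (h0 : r none = PresentedGroup.mk R (sub w0))
    (h1 : ∀ x, r (some (Sum.inl x)) = PresentedGroup.mk R (FreeGroup.of x) *
      (PresentedGroup.mk R (sub (θ (PresentedGroup.mk R (FreeGroup.of x)))))⁻¹)
    (h2 : ∀ y : c, r (some (Sum.inr y)) = PresentedGroup.mk R (sub y)) :
    Subgroup.normalClosure (Set.range r) = ⊤ ↔ Subgroup.normalClosure (insert w0 c) = ⊤ := by
  constructor
  · intro h
    have : Subgroup.normalClosure (Set.range r) ≤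
        (Subgroup.normalClosure (insert w0 c)).comap θ := by
      apply Subgroup.normalClosure_le_normal
      rintro _ ⟨j, rfl⟩
      rcases j with _ | x | y
      · rw [h0, SetLike.mem_coe, Subgroup.mem_comap, hsub]
        exact Subgroup.subset_normalClosure (Set.mem_insert _ _)
      · rw [h1, SetLike.mem_coe, Subgroup.mem_comap, map_mul, map_inv, hsub, mul_inv_cancel]
        exact one_mem _
      · rw [h2, SetLike.mem_coe, Subgroup.mem_comap, hsub]
        exact Subgroup.subset_normalClosure (Set.mem_insert_of_mem _ y.2)
    rw [h] at this
    rw [eq_top_iff]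
    intro w _
    obtain ⟨q, rfl⟩ := hθ w
    exact this (Subgroup.mem_top q)
  · intro h
    have : Subgroup.normalClosure (insert w0 c) ≤
        (Subgroup.normalClosure (Set.range r)).comap ((PresentedGroup.mk R).comp sub) := by
      apply Subgroup.normalClosure_le_normal
      intro w hw
      rw [SetLike.mem_coe, Subgroup.mem_comap, MonoidHom.comp_apply]
      rcases hw with rfl | hw
      · rw [← h0]; exact Subgroup.subset_normalClosure ⟨_, rfl⟩
      · rw [← h2 ⟨w, hw⟩]; exact Subgroup.subset_normalClosure ⟨_, rfl⟩
    rw [h] at this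
    rw [eq_top_iff, ← PresentedGroup.closure_range_of R, Subgroup.closure_le]
    rintro _ ⟨x, rfl⟩
    have e1 := h1 x
    rw [eq_mul_inv_iff_mul_eq] at e1
    show PresentedGroup.mk R (FreeGroup.of x) ∈ _
    rw [← e1]
    exact mul_mem (Subgroup.subset_normalClosure ⟨_, rfl⟩) (this (Subgroup.mem_top _))

theorem no_onto {X : Type} {R : Set (FreeGroup X)} (θ : PresentedGroup R →* FreeGroup (Fin 2))
    (sub : FreeGroup (Fin 2) →* FreeGroup X) (c : Set (FreeGroup (Fin 2)))
    (hc : ∀ i, ∃ kk : ℕ, 0 < kk ∧ FreeGroup.of i ^ kk ∈ c)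
    (r : Option (X ⊕ c) → PresentedGroup R)
    (h1 : ∀ x, r (some (Sum.inl x)) = PresentedGroup.mk R (FreeGroup.of x) *
      (PresentedGroup.mk R (sub (θ (PresentedGroup.mk R (FreeGroup.of x)))))⁻¹)
    (h2 : ∀ y : c, r (some (Sum.inr y)) = PresentedGroup.mk R (sub y))
    (β : PresentedGroup R →* FreeGroup (Fin 2)) (hβ : Function.Surjective β)
    (hk : ∀ j, β (r j) = 1) : False := by
  let γ : FreeGroup (Fin 2) →* FreeGroup (Fin 2) := (β.comp (PresentedGroup.mk R)).comp sub
  have hγ : γ = 1 := by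
    apply FreeGroup.ext_hom
    intro i
    obtain ⟨kk, hkk, hm⟩ := hc i
    have : γ (FreeGroup.of i) ^ kk = 1 := by
      rw [← map_pow]
      have := hk (some (Sum.inr ⟨_, hm⟩))
      rw [h2] at this
      exact this
    exact (pow_eq_one_iff_left hkk.ne').1 this
  have hβ1 : β = 1 := by
    apply PresentedGroup.ext
    intro x
    have := hk (some (Sum.inl x))
    rw [h1, map_mul, map_inv] at this
    have h3 : β (PresentedGroup.mk R (sub (θ (PresentedGroup.mk R (FreeGroup.of x))))) = 1 :=
      DFunLike.congr_fun hγ _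
    rw [h3, inv_one, mul_one] at this
    exact this
  obtain ⟨q, hq⟩ := hβ (FreeGroup.of 0)
  rw [hβ1] at hq
  exact FreeGroup.one_ne_of 0 hq

theorem partD (X : Type) [Finite X] (R : Set (FreeGroup X)) (hRfin : R.Finite)
    (hHopf : IsHopfian (PresentedGroup R))
    (θ : PresentedGroup R →* FreeGroup (Fin 2)) (hθ : Function.Surjective θ)
    (hcent : ∀ H : Subgroup (PresentedGroup R), IsFreeGroup H → ¬ IsCyclic H →
      Subgroup.centralizer (H : Set (PresentedGroup R)) = ⊥)
    (m : ℕ) (hm : 2 ≤ m) (c : Set (FreeGroup (Fin 2))) (Y T K C : FreeGroup (Fin 2))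
    (hcfin : c.Finite) (hc : ∀ i, ∃ kk : ℕ, 0 < kk ∧ FreeGroup.of i ^ kk ∈ c)
    (e : ℕ → ℕ) (he : Computable e) :
    ∃ (N cc : ℕ) (f : ℕ → List (List (Fin N × Bool))), Computable f ∧
      (∀ n, (wordsSet (f n)).ncard = cc) ∧
      ∀ n : ℕ, (∃ φ : PresentedGroup (wordsSet (f n)) →* (Fin m → PresentedGroup R),
          Function.Surjective φ) ↔
        Subgroup.normalClosure (insert (commVal Y T K (e n) * C) c) = ⊤ := by
  classical
  haveI : Finite R := hRfin
  haveI : Finite c := hcfin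
  have hsec : ∀ i : Fin 2, ∃ w, θ (PresentedGroup.mk R w) = FreeGroup.of i := by
    intro i
    obtain ⟨q, hq⟩ := hθ (FreeGroup.of i)
    obtain ⟨w, rfl⟩ := PresentedGroup.mk_surjective R q
    exact ⟨w, hq⟩
  choose sg hsg using hsec
  let sub : FreeGroup (Fin 2) →* FreeGroup X := FreeGroup.lift sg
  have hsub : ∀ w, θ (PresentedGroup.mk R (sub w)) = w := by
    have : (θ.comp (PresentedGroup.mk R)).comp sub = MonoidHom.id _ := by
      apply FreeGroup.ext_hom
      intro i
      simp [sub, hsg]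
    exact fun w => DFunLike.congr_fun this w
  let Jr := Option (X ⊕ c)
  let rs : X ⊕ c → FreeGroup X := Sum.elim
    (fun x => FreeGroup.of x * (sub (θ (PresentedGroup.mk R (FreeGroup.of x))))⁻¹) (fun y => sub y)
  let rf : ℕ → Jr → FreeGroup X := fun n j => j.elim (sub (commVal Y T K (e n) * C)) rs
  let Z0 := X ⊕ (Jr × Fin m)
  let a : FreeGroup X →* FreeGroup Z0 := FreeGroup.map Sum.inl
  let ee : Jr → Fin m → FreeGroup Z0 := fun j i => FreeGroup.of (Sum.inr (j, i))
  let P : Jr → FreeGroup Z0 := fun j => (List.ofFn (ee j)).prod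
  let cj : Jr × Fin m × Option X → FreeGroup Z0 := fun p =>
    a (ox FreeGroup.of p.2.2) * ee p.1 p.2.1 * (a (ox FreeGroup.of p.2.2))⁻¹
  let Rl := R ⊕ (X ⊕ c) ⊕ ((Jr × Fin m × Option X) × (Jr × Fin m × Option X))
  let W : Rl → FreeGroup Z0 := Sum.elim (fun ρ => a ρ) (Sum.elim
    (fun s => a (rs s) * (P (some s))⁻¹)
    (fun p => if p.1.2.1 = p.2.2.1 then 1 else cj p.1 * cj p.2 * (cj p.2 * cj p.1)⁻¹))
  obtain ⟨N, cc, f, hf, hcc, hmain⟩ := encode Z0 Rl W (a (sub Y)) (a (sub T)) (a (sub K))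
    (a (sub C) * (P none)⁻¹) e he
  refine ⟨N, cc, f, hf, hcc, fun n => ?_⟩
  rw [hmain n (Fin m → PresentedGroup R)]
  have hrel : commVal (a (sub Y)) (a (sub T)) (a (sub K)) (e n) * (a (sub C) * (P none)⁻¹) =
      a (rf n none) * (P none)⁻¹ := by
    show _ = a (sub (commVal Y T K (e n) * C)) * _
    rw [map_mul, map_mul, map_commVal, map_commVal, mul_assoc]
  rw [hrel]
  let r : Jr → PresentedGroup R := fun j => PresentedGroup.mk R (rf n j)
  have hr1 : ∀ x, r (some (Sum.inl x)) = PresentedGroup.mk R (FreeGroup.of x) *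
      (PresentedGroup.mk R (sub (θ (PresentedGroup.mk R (FreeGroup.of x)))))⁻¹ := by
    intro x
    rw [← map_inv, ← map_mul]; rfl
  have hr2 : ∀ y : c, r (some (Sum.inr y)) = PresentedGroup.mk R (sub y) := fun y => rfl
  rw [← nc_iff θ hθ sub hsub c (commVal Y T K (e n) * C) r rfl hr1 hr2]
  rw [← onto_iff hm (fun x => PresentedGroup.of (rels := R) x) (PresentedGroup.closure_range_of R) r
    hHopf hcent (fun β hβ hk => no_onto θ sub c hc r hr1 hr2 β hβ hk) θ hθ]
  have hox : ∀ u : Option X, ox (fun x => PresentedGroup.of (rels := R) x) u =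
      PresentedGroup.mk R (ox FreeGroup.of u) := by
    intro u
    cases u
    · exact (map_one _).symm
    · rfl
  constructor
  · rintro ⟨ψ, hψ, hW, hn⟩
    have hk : ∀ w ∈ R, (ψ.comp a) w = 1 := fun w hw => hW (Sum.inl ⟨w, hw⟩)
    let α : PresentedGroup R →* (Fin m → PresentedGroup R) :=
      QuotientGroup.lift _ (ψ.comp a) (fun w hw =>
        (Subgroup.normalClosure_le_normal (N := (ψ.comp a).ker) (fun w hw => hk w hw)) hw)
    have hα : ∀ w, α (PresentedGroup.mk R w) = ψ (a w) := fun w => rfl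
    have hP : ∀ j, ψ (P j) = (List.ofFn (fun i => ψ (ee j i))).prod := by
      intro j
      simp only [P]
      rw [map_list_prod, List.map_ofFn]; rfl
    refine ⟨α, fun j i => ψ (ee j i), ?_, ?_, ?_⟩
    · intro j
      rw [← hP]
      show ψ (a (rf n j)) = _
      rw [← mul_inv_eq_one, ← map_inv, ← map_mul]
      cases j with
      | none => exact hn
      | some s => exact hW (Sum.inr (Sum.inl s))
    · intro i i' hii j j' u v
      have := hW (Sum.inr (Sum.inr ((j, i, u), (j', i', v))))
      simp only [W, Sum.elim_inr, if_neg hii] at this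
      rw [map_mul, map_inv, mul_inv_eq_one, map_mul, map_mul] at this
      simp only [cj, map_mul, map_inv] at this
      rw [hox, hox, hα, hα]
      exact this
    · rw [eq_top_iff]
      intro y _
      obtain ⟨w, rfl⟩ := hψ y
      have : (⊤ : Subgroup (FreeGroup Z0)) ≤ (Subgroup.closure (Set.range α ∪
          Set.range (fun p : Jr × Fin m => ψ (ee p.1 p.2)))).comap ψ := by
        rw [← FreeGroup.closure_range_of, Subgroup.closure_le]
        rintro _ ⟨z, rfl⟩
        rcases z with x | p
        · exact Subgroup.subset_closure (Or.inl ⟨PresentedGroup.mk R (FreeGroup.of x), by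
            rw [hα]; simp [a]⟩)
        · exact Subgroup.subset_closure (Or.inr ⟨p, rfl⟩)
      exact this (Subgroup.mem_top w)
  · rintro ⟨α, ε, hα, hcomm, hgen⟩
    let ψ : FreeGroup Z0 →* (Fin m → PresentedGroup R) := FreeGroup.lift (Sum.elim
      (fun x => α (PresentedGroup.of x)) (fun p => ε p.1 p.2))
    have hψa : ∀ w, ψ (a w) = α (PresentedGroup.mk R w) := by
      have : ψ.comp a = α.comp (PresentedGroup.mk R) := by
        apply FreeGroup.ext_hom
        intro x
        simp [ψ, a, PresentedGroup.of]
      exact fun w => DFunLike.congr_fun this w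
    have hψe : ∀ j i, ψ (ee j i) = ε j i := by intro j i; simp [ψ, ee]
    have hP : ∀ j, ψ (P j) = (List.ofFn (ε j)).prod := by
      intro j
      simp only [P]
      rw [map_list_prod, List.map_ofFn]
      congr 2
      funext i
      exact hψe j i
    have hj : ∀ j, ψ (a (rf n j) * (P j)⁻¹) = 1 := by
      intro j
      rw [map_mul, map_inv, mul_inv_eq_one, hP, hψa, ← hα]
    refine ⟨ψ, ?_, ?_, hj none⟩
    · rw [← MonoidHom.range_eq_top, eq_top_iff, ← hgen, Subgroup.closure_le]
      rintro _ (⟨q, rfl⟩ | ⟨⟨j, i⟩, rfl⟩)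
      · obtain ⟨w, rfl⟩ := PresentedGroup.mk_surjective R q
        exact ⟨a w, hψa w⟩
      · exact ⟨ee j i, hψe j i⟩
    · rintro (ρ | s | ⟨⟨j, i, u⟩, ⟨j', i', v⟩⟩)
      · show ψ (a ρ) = 1
        rw [hψa, PresentedGroup.one_of_mem ρ.2, map_one]
      · exact hj (some s)
      · simp only [W, Sum.elim_inr]
        split_ifs with hii
        · exact map_one _
        · rw [map_mul, map_inv, mul_inv_eq_one, map_mul, map_mul]
          simp only [cj, map_mul, map_inv, hψa, hψe, ← hox]
          exact hcomm i i' hii j j' u v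

end UD

namespace UD
open Turing

section tm
variable {Γ Λ : Type} [Inhabited Γ] [Inhabited Λ] {B : ℕ}

/-- Decoding of a number to a half tape. -/
def decT (B : ℕ) (dec : ℕ → Γ) (n : ℕ) : ListBlank Γ := ListBlank.mk ((Nat.digits B n).map dec)

/-- Encoding of a list as a number. -/
def encL (B : ℕ) (code : Γ → ℕ) (l : List Γ) : ℕ := l.foldr (fun a n => code a + B * n) 0

theorem decT_cons (hB : 1 < B) (dec : ℕ → Γ) (h0 : dec 0 = default) (a n : ℕ) (ha : a < B) :
    decT B dec (a + B * n) = ListBlank.cons (dec a) (decT B dec n) := by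
  by_cases h : a ≠ 0 ∨ n ≠ 0
  · rw [decT, Nat.digits_add B hB a n ha h, List.map_cons]; rfl
  · push Not at h
    obtain ⟨rfl, rfl⟩ := h
    simp only [decT, mul_zero, add_zero, Nat.digits_zero, List.map_nil, h0]
    exact (ListBlank.cons_head_tail (ListBlank.mk ([] : List Γ))).symm

theorem decT_enc (hB : 1 < B) (dec : ℕ → Γ) (h0 : dec 0 = default) (code : Γ → ℕ)
    (hc : ∀ a, code a < B) (hd : ∀ a, dec (code a) = a) (l : List Γ) :
    decT B dec (encL B code l) = ListBlank.mk l := by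
  induction l with
  | nil => simp [encL, decT]
  | cons a l ih =>
    show decT B dec (code a + B * encL B code l) = _
    rw [decT_cons hB dec h0 _ _ (hc a), ih, hd]; rfl

/-- The configuration attached to a point. -/
def cfgT (B : ℕ) (dec : ℕ → Γ) (q : Λ) (γ : Γ) (u v : ℕ) : TM0.Cfg Γ Λ :=
  ⟨q, ⟨γ, decT B dec u, decT B dec v⟩⟩

/-- The rules of a Turing machine. -/
def tmRules (hB : 0 < B) (code : Γ → ℕ) (M : TM0.Machine Γ Λ) :
    Bool ⊕ (Λ × Γ × Γ) → Rule (Option (Λ × Γ))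
  | Sum.inl true => ⟨1, one_pos, none, 0, none, 1⟩
  | Sum.inl false => ⟨1, one_pos, none, 1, none, 0⟩
  | Sum.inr (q, γ, δ) =>
    match M q γ with
    | none => ⟨1, one_pos, some (q, γ), 0, none, 0⟩
    | some (q', TM0.Stmt.write a) => ⟨1, one_pos, some (q, γ), 0, some (q', a), 0⟩
    | some (q', TM0.Stmt.move Dir.right) => ⟨B, hB, some (q, γ), code δ, some (q', δ), code γ⟩
    | some (q', TM0.Stmt.move Dir.left) => ⟨B, hB, some (q', δ), code γ, some (q, γ), code δ⟩

theorem halts_of_none (M : TM0.Machine Γ Λ) (c : TM0.Cfg Γ Λ) (h : TM0.step M c = none) :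
    (StateTransition.eval (TM0.step M) c).Dom := by
  rw [Part.dom_iff_mem]
  exact ⟨c, StateTransition.mem_eval.2 ⟨Relation.ReflTransGen.refl, h⟩⟩

theorem halts_of_some (M : TM0.Machine Γ Λ) (c c' : TM0.Cfg Γ Λ) (h : TM0.step M c = some c') :
    StateTransition.eval (TM0.step M) c = StateTransition.eval (TM0.step M) c' :=
  StateTransition.reaches_eval (Relation.ReflTransGen.single h)

/-- Points which are fine. -/
def GoodPt (B : ℕ) (dec : ℕ → Γ) (M : TM0.Machine Γ Λ) : Option (Λ × Γ) × ℤ × ℤ → Prop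
  | (none, _, _) => True
  | (some (q, γ), U, V) => ∀ u v : ℕ, U = u → V = v →
      (StateTransition.eval (TM0.step M) (cfgT B dec q γ u v)).Dom

theorem goodPt_nat (dec : ℕ → Γ) (M : TM0.Machine Γ Λ) (q : Λ) (γ : Γ) (u v : ℕ) :
    GoodPt B dec M (some (q, γ), (u : ℤ), (v : ℤ)) ↔
      (StateTransition.eval (TM0.step M) (cfgT B dec q γ u v)).Dom := by
  constructor
  · intro h; exact h u v rfl rfl
  · intro h u' v' hu hv
    rw [Nat.cast_inj] at hu hv
    rw [← hu, ← hv]; exact h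

theorem goodPt_neg (dec : ℕ → Γ) (M : TM0.Machine Γ Λ) (p : Option (Λ × Γ)) (U V : ℤ)
    (h : ¬ (0 ≤ U ∧ 0 ≤ V)) : GoodPt B dec M (p, U, V) := by
  rcases p with _ | ⟨q, γ⟩
  · trivial
  · intro u v hu hv
    exfalso; apply h; rw [hu, hv]; constructor <;> positivity

theorem step_right (hB : 1 < B) (dec : ℕ → Γ) (h0 : dec 0 = default) (code : Γ → ℕ)
    (hc : ∀ a, code a < B) (hd : ∀ a, dec (code a) = a) (M : TM0.Machine Γ Λ) (q q' : Λ) (γ δ : Γ)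
    (hM : M q γ = some (q', TM0.Stmt.move Dir.right)) (u v : ℕ) :
    TM0.step M (cfgT B dec q γ u (code δ + B * v)) = some (cfgT B dec q' δ (code γ + B * u) v) := by
  simp only [TM0.step, cfgT, hM, Option.map_some, Tape.move]
  rw [decT_cons hB dec h0 _ _ (hc _), decT_cons hB dec h0 _ _ (hc _), hd, hd]
  simp

theorem step_left (hB : 1 < B) (dec : ℕ → Γ) (h0 : dec 0 = default) (code : Γ → ℕ)
    (hc : ∀ a, code a < B) (hd : ∀ a, dec (code a) = a) (M : TM0.Machine Γ Λ) (q q' : Λ) (γ δ : Γ)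
    (hM : M q γ = some (q', TM0.Stmt.move Dir.left)) (u v : ℕ) :
    TM0.step M (cfgT B dec q γ (code δ + B * u) v) = some (cfgT B dec q' δ u (code γ + B * v)) := by
  simp only [TM0.step, cfgT, hM, Option.map_some, Tape.move]
  rw [decT_cons hB dec h0 _ _ (hc _), decT_cons hB dec h0 _ _ (hc _), hd, hd]
  simp

theorem step_write (dec : ℕ → Γ) (M : TM0.Machine Γ Λ) (q q' : Λ) (γ a : Γ)
    (hM : M q γ = some (q', TM0.Stmt.write a)) (u v : ℕ) :
    TM0.step M (cfgT B dec q γ u v) = some (cfgT B dec q' a u v) := by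
  simp only [TM0.step, cfgT, hM, Option.map_some, Tape.write]

theorem step_halt (dec : ℕ → Γ) (M : TM0.Machine Γ Λ) (q : Λ) (γ : Γ)
    (hM : M q γ = none) (u v : ℕ) :
    TM0.step M (cfgT B dec q γ u v) = none := by
  simp only [TM0.step, cfgT, hM, Option.map_none]

theorem good_step (hB : 1 < B) (hB0 : 0 < B) (dec : ℕ → Γ) (h0 : dec 0 = default) (code : Γ → ℕ)
    (hc : ∀ a, code a < B) (hd : ∀ a, dec (code a) = a) (M : TM0.Machine Γ Λ)
    (p p' : Option (Λ × Γ) × ℤ × ℤ) (h : RStep (tmRules hB0 code M) p p') :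
    GoodPt B dec M p ↔ GoodPt B dec M p' := by
  have hneg : ∀ (a : Γ) (W : ℤ), 0 ≤ (code a : ℤ) + (B : ℤ) * W → 0 ≤ W := by
    intro a W hW
    by_contra hlt
    have h1 : (code a : ℤ) < B := by exact_mod_cast hc a
    have h2 : W ≤ -1 := by omega
    nlinarith
  have hpos : ∀ (a : Γ) (W : ℤ), 0 ≤ W → 0 ≤ (code a : ℤ) + (B : ℤ) * W := by
    intro a W hW; positivity
  obtain ⟨j, U, V, rfl, rfl⟩ := h
  rcases j with (_ | _) | ⟨q, γ, δ⟩
  · exact Iff.rfl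
  · exact Iff.rfl
  · rcases hM : M q γ with _ | ⟨q', (_ | _) | a⟩
    · simp only [tmRules, hM]
      refine iff_of_true ?_ trivial
      intro u v _ _
      exact halts_of_none M _ (step_halt dec M q γ hM u v)
    · simp only [tmRules, hM]
      by_cases hUV : 0 ≤ U ∧ 0 ≤ V
      · obtain ⟨h1, h2⟩ := hUV
        lift U to ℕ using h1
        lift V to ℕ using h2
        have e1 : (code γ : ℤ) + (B : ℤ) * (V : ℤ) = ((code γ + B * V : ℕ) : ℤ) := by push_cast; rfl
        have e2 : (code δ : ℤ) + (B : ℤ) * (U : ℤ) = ((code δ + B * U : ℕ) : ℤ) := by push_cast; rfl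
        rw [e1, e2, goodPt_nat, goodPt_nat,
          halts_of_some M _ _ (step_left hB dec h0 code hc hd M q q' γ δ hM U V)]
      · exact iff_of_true (goodPt_neg _ _ _ _ _ (fun h => hUV ⟨h.1, hneg _ _ h.2⟩))
          (goodPt_neg _ _ _ _ _ (fun h => hUV ⟨hneg _ _ h.1, h.2⟩))
    · simp only [tmRules, hM]
      by_cases hUV : 0 ≤ U ∧ 0 ≤ V
      · obtain ⟨h1, h2⟩ := hUV
        lift U to ℕ using h1
        lift V to ℕ using h2
        have e1 : (code γ : ℤ) + (B : ℤ) * (U : ℤ) = ((code γ + B * U : ℕ) : ℤ) := by push_cast; rfl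
        have e2 : (code δ : ℤ) + (B : ℤ) * (V : ℤ) = ((code δ + B * V : ℕ) : ℤ) := by push_cast; rfl
        rw [e1, e2, goodPt_nat, goodPt_nat,
          halts_of_some M _ _ (step_right hB dec h0 code hc hd M q q' γ δ hM U V)]
      · exact iff_of_true (goodPt_neg _ _ _ _ _ (fun h => hUV ⟨h.1, hneg _ _ h.2⟩))
          (goodPt_neg _ _ _ _ _ (fun h => hUV ⟨hneg _ _ h.1, h.2⟩))
    · simp only [tmRules, hM]
      simp only [Nat.cast_zero, Nat.cast_one, zero_add, one_mul]
      by_cases hUV : 0 ≤ U ∧ 0 ≤ V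
      · obtain ⟨h1, h2⟩ := hUV
        lift U to ℕ using h1
        lift V to ℕ using h2
        rw [goodPt_nat, goodPt_nat, halts_of_some M _ _ (step_write dec M q q' γ a hM U V)]
      · exact iff_of_true (goodPt_neg _ _ _ _ _ hUV) (goodPt_neg _ _ _ _ _ hUV)

theorem eqv_star (hB0 : 0 < B) (code : Γ → ℕ) (M : TM0.Machine Γ Λ) (u v : ℕ) :
    Relation.EqvGen (RStep (tmRules hB0 code M)) (none, (u : ℤ), (v : ℤ)) (none, 0, 0) := by
  induction u with
  | zero =>
    induction v with
    | zero => exact Relation.EqvGen.refl _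
    | succ v ih =>
      refine Relation.EqvGen.trans _ _ _ (Relation.EqvGen.rel _ _ ?_) ih
      exact ⟨Sum.inl false, 0, v, by simp [tmRules]; ring, by simp [tmRules]⟩
  | succ u ih =>
    refine Relation.EqvGen.trans _ _ _ (Relation.EqvGen.symm _ _ (Relation.EqvGen.rel _ _ ?_)) ih
    exact ⟨Sum.inl true, u, v, by simp [tmRules], by simp [tmRules]; ring⟩

theorem eqv_of_halts (hB : 1 < B) (hB0 : 0 < B) (dec : ℕ → Γ) (h0 : dec 0 = default) (code : Γ → ℕ)
    (hc : ∀ a, code a < B) (hd : ∀ a, dec (code a) = a) (hdc : ∀ n, n < B → code (dec n) = n)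
    (M : TM0.Machine Γ Λ)
    (c b : TM0.Cfg Γ Λ) (h : Relation.ReflTransGen (fun a b => b ∈ TM0.step M a) c b)
    (hb : TM0.step M b = none) : ∀ (q : Λ) (γ : Γ) (u v : ℕ), c = cfgT B dec q γ u v →
    Relation.EqvGen (RStep (tmRules hB0 code M)) (some (q, γ), (u : ℤ), (v : ℤ)) (none, 0, 0) := by
  have hsplit : ∀ n : ℕ, ∃ (a : Γ) (n' : ℕ), n = code a + B * n' := by
    intro n
    refine ⟨dec (n % B), n / B, ?_⟩
    rw [hdc _ (Nat.mod_lt _ hB0), Nat.mod_add_div]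
  induction h using Relation.ReflTransGen.head_induction_on with
  | refl =>
    rintro q γ u v rfl
    have hM : M q γ = none := by
      simpa [TM0.step, cfgT] using hb
    refine Relation.EqvGen.trans _ _ _ (Relation.EqvGen.rel _ _ ?_) (eqv_star hB0 code M u v)
    exact ⟨Sum.inr (q, γ, γ), u, v, by simp [tmRules, hM], by simp [tmRules, hM]⟩
  | head hstep _ ih =>
    rintro q γ u v rfl
    rcases hM : M q γ with _ | ⟨q', (_ | _) | a⟩
    · rw [step_halt dec M q γ hM] at hstep
      simp at hstep
    · obtain ⟨δ, u', rfl⟩ := hsplit u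
      rw [step_left hB dec h0 code hc hd M q q' γ δ hM] at hstep
      refine Relation.EqvGen.trans _ _ _ (Relation.EqvGen.symm _ _ (Relation.EqvGen.rel _ _ ?_))
        (ih q' δ u' _ (Option.some_injective _ hstep).symm)
      exact ⟨Sum.inr (q, γ, δ), u', v, by simp [tmRules, hM], by simp [tmRules, hM]⟩
    · obtain ⟨δ, v', rfl⟩ := hsplit v
      rw [step_right hB dec h0 code hc hd M q q' γ δ hM] at hstep
      refine Relation.EqvGen.trans _ _ _ (Relation.EqvGen.rel _ _ ?_)
        (ih q' δ _ v' (Option.some_injective _ hstep).symm)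
      exact ⟨Sum.inr (q, γ, δ), u, v', by simp [tmRules, hM], by simp [tmRules, hM]⟩
    · rw [step_write dec M q q' γ a hM] at hstep
      refine Relation.EqvGen.trans _ _ _ (Relation.EqvGen.rel _ _ ?_)
        (ih q' a u v (Option.some_injective _ hstep).symm)
      exact ⟨Sum.inr (q, γ, γ), u, v, by simp [tmRules, hM], by simp [tmRules, hM]⟩

theorem tm_rules [Finite Γ] [Nontrivial Γ] [Finite Λ] (M : TM0.Machine Γ Λ) (q0 : Λ) (γ0 : Γ) :
    ∃ (B : ℕ) (code : Γ → ℕ) (I J : Type) (_ : Finite I) (_ : Finite J) (rules : J → Rule I)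
      (i0 istar : I), ∀ l : List Γ,
      (StateTransition.eval (TM0.step M) ⟨q0, Tape.mk₁ (γ0 :: l)⟩).Dom ↔
      Relation.EqvGen (RStep rules) (i0, 0, ((encL B code l : ℕ) : ℤ)) (istar, 0, 0) := by
  classical
  haveI := Fintype.ofFinite Γ
  let B := Fintype.card Γ
  have hB : 1 < B := Fintype.one_lt_card
  have hB0 : 0 < B := by omega
  let e0 : Γ ≃ Fin B := Fintype.equivFin Γ
  let e : Γ ≃ Fin B := e0.trans (Equiv.swap (e0 default) ⟨0, hB0⟩)
  have he : e default = ⟨0, hB0⟩ := by simp [e]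
  let code : Γ → ℕ := fun a => e a
  let dec : ℕ → Γ := fun n => if h : n < B then e.symm ⟨n, h⟩ else default
  have h0 : dec 0 = default := by
    simp only [dec, dif_pos hB0]
    rw [← he, Equiv.symm_apply_apply]
  have hc : ∀ a, code a < B := fun a => (e a).2
  have hd : ∀ a, dec (code a) = a := by
    intro a
    simp only [dec, dif_pos (hc a)]
    exact e.symm_apply_apply a
  have hdc : ∀ n, n < B → code (dec n) = n := by
    intro n hn
    simp only [dec, dif_pos hn, code, Equiv.apply_symm_apply]
  refine ⟨B, code, Option (Λ × Γ), Bool ⊕ (Λ × Γ × Γ), inferInstance, inferInstance,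
    tmRules hB0 code M, some (q0, γ0), none, fun l => ?_⟩
  have hcfg : (⟨q0, Tape.mk₁ (γ0 :: l)⟩ : TM0.Cfg Γ Λ) = cfgT B dec q0 γ0 0 (encL B code l) := by
    simp only [cfgT]
    rw [decT_enc hB dec h0 code hc hd]
    simp only [Tape.mk₁, Tape.mk₂, Tape.mk', decT, Nat.digits_zero, List.map_nil]
    rfl
  rw [hcfg]
  constructor
  · intro h
    obtain ⟨b, hb⟩ := Part.dom_iff_mem.1 h
    obtain ⟨h1, h2⟩ := StateTransition.mem_eval.1 hb
    exact eqv_of_halts hB hB0 dec h0 code hc hd hdc M _ b h1 h2 q0 γ0 0 _ rfl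
  · intro h
    have key : ∀ p p', Relation.EqvGen (RStep (tmRules hB0 code M)) p p' →
        (GoodPt B dec M p ↔ GoodPt B dec M p') := by
      intro p p' h
      induction h with
      | rel _ _ h => exact good_step hB hB0 dec h0 code hc hd M _ _ h
      | refl _ => exact Iff.rfl
      | symm _ _ _ ih => exact ih.symm
      | trans _ _ _ _ _ h1 h2 => exact h1.trans h2
    have := (key _ _ h).2 trivial
    exact (goodPt_nat dec M q0 γ0 0 _).1 this

end tm
end UD

namespace UD

open Turing in
theorem tm0_fin {Γ Λ : Type} [Inhabited Γ] [Inhabited Λ] (M : TM0.Machine Γ Λ) (S : Finset Λ)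
    (ss : TM0.Supports M (S : Set Λ)) :
    ∃ (Λ' : Type) (_ : Inhabited Λ') (_ : Finite Λ') (M' : TM0.Machine Γ Λ'), ∀ l : List Γ,
      (StateTransition.eval (TM0.step M') (TM0.init l)).Dom ↔
        (StateTransition.eval (TM0.step M) (TM0.init l)).Dom := by
  classical
  have h0 : (default : Λ) ∈ S := by exact_mod_cast ss.1
  letI inst : Inhabited {x // x ∈ S} := ⟨⟨default, h0⟩⟩
  let g₁ : PointedMap Λ {x // x ∈ S} :=
    ⟨fun q => if h : q ∈ S then ⟨q, h⟩ else ⟨default, h0⟩, by simp [h0]; rfl⟩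
  let f₁ : PointedMap Γ Γ := ⟨id, rfl⟩
  refine ⟨{x // x ∈ S}, inst, inferInstance, M.map f₁ f₁ g₁ Subtype.val, fun l => ?_⟩
  have hr := TM0.Machine.map_respects M f₁ f₁ g₁ Subtype.val (S := (S : Set Λ)) ss (fun _ => rfl)
    (by
      intro q hq
      have hq' : q ∈ S := by exact_mod_cast hq
      show (if h : q ∈ S then (⟨q, h⟩ : {x // x ∈ S}) else ⟨default, h0⟩).1 = q
      rw [dif_pos hq'])
  have := StateTransition.tr_eval_dom hr (a₁ := TM0.init l) (a₂ := TM0.init l) ⟨ss.1, by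
    rw [TM0.map_init]
    congr 1
    exact List.map_id l⟩
  exact this

theorem trNat_two_pow (n : ℕ) : Turing.PartrecToTM2.trNat (2 ^ n) =
    List.replicate n Turing.PartrecToTM2.Γ'.bit0 ++ [Turing.PartrecToTM2.Γ'.bit1] := by
  have h : ∀ n : ℕ, ∃ p : PosNum, ((2 ^ n : ℕ) : Num) = Num.pos p ∧
      Turing.PartrecToTM2.trPosNum p =
        List.replicate n Turing.PartrecToTM2.Γ'.bit0 ++ [Turing.PartrecToTM2.Γ'.bit1] := by
    intro n
    induction n with
    | zero => exact ⟨PosNum.one, by simp; rfl, rfl⟩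
    | succ n ih =>
      obtain ⟨p, hp, hp2⟩ := ih
      refine ⟨PosNum.bit0 p, ?_, ?_⟩
      · rw [pow_succ, mul_two, Nat.cast_add, hp]
        have := (Num.bit0_of_bit0 (Num.pos p))
        rw [this]; rfl
      · rw [Turing.PartrecToTM2.trPosNum, hp2]; rfl
  obtain ⟨p, hp, hp2⟩ := h n
  rw [Turing.PartrecToTM2.trNat, hp, Turing.PartrecToTM2.trNum, hp2]

open Turing in
theorem tm2_tm0 {K : Type} [DecidableEq K] {Γ : K → Type} {Λ σ : Type} [Inhabited Λ] [Inhabited σ]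
    [Fintype σ] (M : Λ → TM2.Stmt Γ Λ σ) (S : Finset Λ) (ss : TM2.Supports M S) (k : K) :
    ∃ (Λ' : Type) (_ : Inhabited Λ') (_ : Finite Λ') (M' : TM0.Machine (TM2to1.Γ' K Γ) Λ'),
      ∀ L, (StateTransition.eval (TM0.step M') (TM0.init (TM2to1.trInit k L))).Dom ↔
        (TM2.eval M k L).Dom := by
  classical
  have h1 := TM2to1.tr_supports _ ss
  have h0 := TM1to0.tr_supports _ h1
  obtain ⟨Λ, iΛ, fΛ, M', hM⟩ := tm0_fin _ _ h0
  refine ⟨Λ, iΛ, fΛ, M', fun L => (hM _).trans ?_⟩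
  have e3 := TM1to0.tr_eval (TM2to1.tr M) (TM2to1.trInit k L)
  have e4 := TM2to1.tr_eval_dom M k L
  rw [← e3] at e4
  exact e4

open Turing in
theorem trInit_rev {K : Type} [DecidableEq K] {Γ : K → Type} (k : K) (L : List (Γ k))
    (a : Γ k) (l : List (Γ k)) (h : L.reverse = a :: l) :
    TM2to1.trInit k L = ((true, Function.update (fun _ => none) k (some a)) : TM2to1.Γ' K Γ) ::
      l.map (fun b => ((false, Function.update (fun _ => none) k (some b)) : TM2to1.Γ' K Γ)) := by
  rw [TM2to1.trInit, h]; rfl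

open Turing in
theorem code_tm (c : ToPartrec.Code) : ∃ (Γ Λ : Type) (_ : Inhabited Γ) (_ : Inhabited Λ)
    (_ : Finite Γ) (_ : Nontrivial Γ) (_ : Finite Λ) (M : TM0.Machine Γ Λ) (γ0 s0 s1 : Γ),
    ∀ n : ℕ, (StateTransition.eval (TM0.step M)
      ⟨default, Tape.mk₁ (γ0 :: s1 :: List.replicate n s0)⟩).Dom ↔ (c.eval [2 ^ n]).Dom := by
  classical
  letI i0 : Inhabited PartrecToTM2.Λ' := ⟨PartrecToTM2.trNormal c PartrecToTM2.Cont'.halt⟩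
  have h2 := PartrecToTM2.tr_supports c PartrecToTM2.Cont'.halt
  obtain ⟨Λ, iΛ, fΛ, M, hM⟩ := tm2_tm0 _ _ h2 PartrecToTM2.K'.main
  let s : PartrecToTM2.Γ' → TM2to1.Γ' PartrecToTM2.K' (fun _ => PartrecToTM2.Γ') := fun a =>
    (false, Function.update (fun _ => none) PartrecToTM2.K'.main (some a))
  refine ⟨TM2to1.Γ' PartrecToTM2.K' (fun _ => PartrecToTM2.Γ'), Λ, inferInstance, iΛ,
    ?_, ?_, fΛ, M, (true, Function.update (fun _ => none) PartrecToTM2.K'.main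
      (some PartrecToTM2.Γ'.cons)), s PartrecToTM2.Γ'.bit0, s PartrecToTM2.Γ'.bit1, ?_⟩
  · show Finite (Bool × (PartrecToTM2.K' → Option PartrecToTM2.Γ'))
    haveI : Fintype PartrecToTM2.K' := ⟨{PartrecToTM2.K'.main, PartrecToTM2.K'.rev,
      PartrecToTM2.K'.aux, PartrecToTM2.K'.stack}, by intro x; cases x <;> simp⟩
    infer_instance
  · refine ⟨(true, fun _ => none), (false, fun _ => none), fun h => ?_⟩
    exact Bool.noConfusion (congrArg Prod.fst h)
  · intro n
    have e2 := hM (PartrecToTM2.trList [2 ^ n])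
    rw [trInit_rev (Γ := fun _ => PartrecToTM2.Γ') PartrecToTM2.K'.main (PartrecToTM2.trList [2 ^ n]) PartrecToTM2.Γ'.cons
      (PartrecToTM2.Γ'.bit1 :: List.replicate n PartrecToTM2.Γ'.bit0)
      (by simp [PartrecToTM2.trList, trNat_two_pow]), List.map_cons, List.map_replicate] at e2
    refine Iff.trans e2 ?_
    have e5 := PartrecToTM2.tr_eval c [2 ^ n]
    have e6 : PartrecToTM2.init c [2 ^ n] =
        TM2.init PartrecToTM2.K'.main (PartrecToTM2.trList [2 ^ n]) := by
      rw [PartrecToTM2.init, TM2.init]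
      congr 1
      funext k
      cases k <;> simp
    rw [e6] at e5
    show (StateTransition.eval (TM2.step PartrecToTM2.tr)
      (TM2.init PartrecToTM2.K'.main (PartrecToTM2.trList [2 ^ n]))).Dom ↔ _
    rw [e5]
    rfl

/-- The halting set. -/
def haltS (n : ℕ) : Prop := (Nat.Partrec.Code.eval (Denumerable.ofNat Nat.Partrec.Code n) 0).Dom

theorem haltS_re : REPred haltS := by
  have h := ComputablePred.halting_problem_re 0
  exact h.comp (Computable.ofNat Nat.Partrec.Code)

theorem haltS_not : ¬ ComputablePred haltS := by
  intro h
  apply ComputablePred.halting_problem 0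
  have : (fun c : Nat.Partrec.Code => (Nat.Partrec.Code.eval c 0).Dom) =
      fun c => haltS (Encodable.encode c) := by
    funext c; simp [haltS]
  rw [this]
  obtain ⟨d, hd⟩ := h
  exact ⟨fun c => d _, hd.comp Computable.encode⟩

theorem halt_code : ∃ c : Turing.ToPartrec.Code, ∀ n : ℕ, (c.eval [2 ^ n]).Dom ↔ haltS n := by
  let h : ℕ →. ℕ := fun v => (Nat.rfind fun n => Part.some (decide (2 ^ n = v))).bind
    fun n => Nat.Partrec.Code.eval (Denumerable.ofNat Nat.Partrec.Code n) 0
  have hp : Primrec₂ (fun (v n : ℕ) => decide (2 ^ n = v)) := by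
    have h1 : Primrec fun n : ℕ => 2 ^ n := by
      have := Primrec.nat_rec₁ 1 (f := fun _ m => 2 * m)
        (Primrec.nat_mul.comp (Primrec.const 2) Primrec.snd)
      refine this.of_eq fun n => ?_
      induction n with
      | zero => rfl
      | succ n ih => rw [pow_succ, mul_comm, ← ih]
    have h2 : PrimrecRel (fun (v n : ℕ) => 2 ^ n = v) :=
      PrimrecRel.comp Primrec.eq (h1.comp Primrec.snd) Primrec.fst
    exact PrimrecPred.decide h2
  have hh : Partrec h := by
    refine Partrec.bind (Partrec.rfind (Computable₂.partrec₂ hp.to_comp)) ?_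
    refine Nat.Partrec.Code.eval_part.comp ((Computable.ofNat _).comp Computable.snd) (Computable.const 0)
  have h' := Nat.Partrec'.part_iff₁.2 hh
  obtain ⟨c, hc⟩ := Turing.ToPartrec.Code.exists_code h'
  refine ⟨c, fun n => ?_⟩
  have := hc (2 ^ n ::ᵥ List.Vector.nil)
  have e : (2 ^ n ::ᵥ List.Vector.nil : List.Vector ℕ 1).1 = [2 ^ n] := rfl
  rw [e] at this
  rw [this]
  have hr : n ∈ Nat.rfind fun k => Part.some (decide (2 ^ k = 2 ^ n)) := by
    refine Nat.mem_rfind.2 ⟨by simp, fun {k} hk => ?_⟩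
    have : 2 ^ k ≠ 2 ^ n := fun h => hk.ne (Nat.pow_right_injective (le_refl 2) h)
    simp [this]
  show (h (2 ^ n)).Dom ↔ _
  have e2 : h (2 ^ n) = Nat.Partrec.Code.eval (Denumerable.ofNat Nat.Partrec.Code n) 0 := by
    show (Nat.rfind _).bind _ = _
    rw [Part.eq_some_iff.2 hr, Part.bind_some]
  rw [e2]; rfl

theorem partA : ∃ (I J : Type) (_ : Finite I) (_ : Finite J) (rules : J → Rule I) (i0 istar : I)
    (e : ℕ → ℕ), Computable e ∧ ∀ n, haltS n ↔
      Relation.EqvGen (RStep rules) (i0, 0, (e n : ℤ)) (istar, 0, 0) := by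
  obtain ⟨c, hc⟩ := halt_code
  obtain ⟨Γ, Λ, iΓ, iΛ, fΓ, nΓ, fΛ, M, γ0, s0, s1, hM⟩ := code_tm c
  obtain ⟨B, code, I, J, fI, fJ, rules, i0, istar, hr⟩ := tm_rules M default γ0
  refine ⟨I, J, fI, fJ, rules, i0, istar,
    fun n => encL B code (s1 :: List.replicate n s0), ?_, fun n => ?_⟩
  · have h1 : Primrec fun n : ℕ => encL B code (List.replicate n s0) := by
      have := Primrec.nat_rec₁ 0 (f := fun _ m => code s0 + B * m)
        (Primrec.nat_add.comp (Primrec.const _) (Primrec.nat_mul.comp (Primrec.const B) Primrec.snd))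
      refine this.of_eq fun n => ?_
      induction n with
      | zero => rfl
      | succ n ih => rw [List.replicate_succ]; simp only [encL, List.foldr_cons] at ih ⊢; rw [← ih]
    exact (Primrec.nat_add.comp (Primrec.const (code s1))
      (Primrec.nat_mul.comp (Primrec.const B) h1)).to_comp
  · rw [← hc n, ← hM n]
    exact hr _

end UD


/-- Theorem 1.1 (2): for suitable `Q` and `m ≥ 2`, there are a finite generating type
`Fin N`, a constant `c` and a computable sequence `(R_n)` of finite relator sets of
cardinality `c` such that `{n : PresentedGroup (R_n) maps onto Q^m}` is recursively
enumerable but not recursive. -/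
theorem stmt4 (X : Type) [Finite X] (R : Set (FreeGroup X)) (hRfin : R.Finite)
    (hHopf : IsHopfian (PresentedGroup R))
    (hF2 : ∃ θ : PresentedGroup R →* FreeGroup (Fin 2), Function.Surjective θ)
    (hcent : ∀ H : Subgroup (PresentedGroup R), IsFreeGroup H → ¬ IsCyclic H →
      Subgroup.centralizer (H : Set (PresentedGroup R)) = ⊥)
    (m : ℕ) (hm : 2 ≤ m) :
    ∃ (N : ℕ) (c : ℕ) (f : ℕ → List (List (Fin N × Bool))),
      Computable f ∧
      (∀ n : ℕ, (wordsSet (f n)).ncard = c) ∧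
      (∃ g : ℕ →. Unit, Partrec g ∧
        ∀ n : ℕ,
          (∃ φ : PresentedGroup (wordsSet (f n)) →* (Fin m → PresentedGroup R),
            Function.Surjective φ) ↔ (g n).Dom) ∧
      ¬ ComputablePred (fun n : ℕ =>
          ∃ φ : PresentedGroup (wordsSet (f n)) →* (Fin m → PresentedGroup R),
            Function.Surjective φ) := by
  obtain ⟨θ, hθ⟩ := hF2
  obtain ⟨I, J, fI, fJ, rules, i0, istar, e, he, hS⟩ := UD.partA
  obtain ⟨c, Y, T, K, C, hcfin, hc, hBC⟩ := UD.partBC I J rules i0 istar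
  obtain ⟨N, cc, f, hf, hcard, hiff⟩ :=
    UD.partD X R hRfin hHopf θ hθ hcent m hm c Y T K C hcfin hc e he
  have hall : (fun n : ℕ => ∃ φ : PresentedGroup (wordsSet (f n)) →* (Fin m → PresentedGroup R),
      Function.Surjective φ) = UD.haltS := by
    funext n
    exact propext ((hiff n).trans ((hBC (e n)).trans (hS n).symm))
  refine ⟨N, cc, f, hf, hcard, ⟨_, UD.haltS_re, fun n => ?_⟩, ?_⟩
  · rw [congrFun hall n]
    exact ⟨fun h => ⟨h, trivial⟩, fun h => h.1⟩
  · rw [hall]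
    exact UD.haltS_not
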